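/- arXiv:2502.20958 — 2 statements merged into one kernel-verified Lean document; each statement's English description precedes it below -/
import Mathlib

section
/- For 1 ≤ a ≤ b ≤ n define elements B_{[a,b]} of U = U^ı(sl_{n+1}) by B_{[a,a]} = B_a and B_{[a,b]} = B_{[a,b−1]} B_b − q B_b B_{[a,b−1]} for b > a. Then the set of all products B_{[a_1,b_1]} B_{[a_2,b_2]} ⋯ B_{[a_m,b_m]} (m ≥ 0, empty product equal to 1), where the words v_{a_1}⋯v_{b_1} ≥ v_{a_2}⋯v_{b_2} ≥ ⋯ ≥ v_{a_m}⋯v_{b_m} in lexicographic order, is a ℚ(q)-basis of U (the Lyndon basis, which coincides with the Xu–Yang PBW-type basis). -/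
/-!
*Spanning.* Filter `U` by word length. In the associated graded algebra the Serre relations are
homogeneous and the root vectors straighten: for segments `[a,b] < [c,d]` with `c ≠ b + 1`, the
product `B_{[a,b]} B_{[c,d]}` is a combination of `B_{[c,d]} B_{[a,b]}` and, when the segments
overlap, of `B_{[a,d]} B_{[c,b]}`, while for `c = b + 1` the `q`-commutator of the two is
`B_{[a,d]}`. Modulo lower filtration terms, each rule replaces a list of segments by
lexicographically larger ones of the same total length, of which there are only finitely many.

*Independence.* On the subalgebra of the `q`-shuffle algebra generated by the letters, the
multiplications `S_i` by letters and the deletions `∂_i` of a first letter satisfy `q`-boson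
relations, and the families `S` and `∂` each satisfy the homogeneous Serre relations; hence the
operators `S_i + (1 - q²)⁻¹ ∂_i` satisfy the relations of `U`. Applied to the empty word, a
product of root vectors gives a nonzero multiple of the `q`-shuffle product of its segments plus
terms of smaller degree. For a nonincreasing list of segments, the largest word of that shuffle
product is their concatenation, which determines the list. Its coefficient is nonzero because
`ℚ(q)` embeds into `ℝ` with `q > 1`, where all shuffle coefficients are nonnegative and this one
is positive. The products are therefore triangular with respect to distinct words.
-/

/-- The lexicographic order on words over the alphabet `v_0 < v_1 < ⋯ < v_{n-1}`
(indexed by `Fin n`), in which a word is smaller than any word having it as a proper prefix. -/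
def LexLt {n : ℕ} (x y : List (Fin n)) : Prop := List.Lex (· < ·) x y

/-- The order `≺` : `x ≺ y` iff `ℓ(x) < ℓ(y)`, or `ℓ(x) = ℓ(y)` and `x > y` lexicographically. -/
def PrecLt {n : ℕ} (x y : List (Fin n)) : Prop :=
  x.length < y.length ∨ (x.length = y.length ∧ LexLt y x)

/-- The order `≼` : `x ≼ y` iff `x ≺ y` or `x = y`. -/
def PrecLe {n : ℕ} (x y : List (Fin n)) : Prop := PrecLt x y ∨ x = y

/-- A nonempty word is Lyndon if it is lexicographically strictly smaller than every proper
nonempty suffix of itself. -/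
def IsLyndon {n : ℕ} (l : List (Fin n)) : Prop :=
  l ≠ [] ∧ ∀ k : ℕ, 0 < k → k < l.length → LexLt l (l.drop k)

/-- `B_w = b_{i_1} ⋯ b_{i_k} ∈ R` for the word `w = v_{i_1} ⋯ v_{i_k}` (`B_w = 1` for `w = []`). -/
def Bword {n : ℕ} {R : Type*} [Monoid R] (b : Fin n → R) (w : List (Fin n)) : R :=
  (w.map b).prod

/-- A word `g` is good if `B_g` does not lie in the `K`-linear span of the `B_w` with `w ≺ g`. -/
def IsGood (K : Type*) {n : ℕ} {R : Type*} [Field K] [Ring R] [Algebra K R]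
    (b : Fin n → R) (g : List (Fin n)) : Prop :=
  Bword b g ∉ Submodule.span K (Bword b '' {w | PrecLt w g})

/-- The defining relations of the split ıquantum group `U^ı(sl_{n+1})` of type `A_n` with
parameters `ξ_i = q⁻¹` : `B_iB_j = B_jB_i` for `|i-j| ≥ 2` and
`B_i²B_j - (q+q⁻¹) B_iB_jB_i + B_jB_i² = B_j` for `|i-j| = 1`. -/
inductive UiRel (n : ℕ) :
    FreeAlgebra (RatFunc ℚ) (Fin n) → FreeAlgebra (RatFunc ℚ) (Fin n) → Prop
  | comm (i j : Fin n) (h : (i : ℕ) + 1 < (j : ℕ)) :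
      UiRel n (FreeAlgebra.ι (RatFunc ℚ) i * FreeAlgebra.ι (RatFunc ℚ) j)
        (FreeAlgebra.ι (RatFunc ℚ) j * FreeAlgebra.ι (RatFunc ℚ) i)
  | serre (i j : Fin n) (h : (i : ℕ) + 1 = (j : ℕ) ∨ (j : ℕ) + 1 = (i : ℕ)) :
      UiRel n
        (FreeAlgebra.ι (RatFunc ℚ) i * FreeAlgebra.ι (RatFunc ℚ) i * FreeAlgebra.ι (RatFunc ℚ) j +
          FreeAlgebra.ι (RatFunc ℚ) j * FreeAlgebra.ι (RatFunc ℚ) i * FreeAlgebra.ι (RatFunc ℚ) i)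
        (((RatFunc.X : RatFunc ℚ) + (RatFunc.X : RatFunc ℚ)⁻¹) • (FreeAlgebra.ι (RatFunc ℚ) i *
            FreeAlgebra.ι (RatFunc ℚ) j * FreeAlgebra.ι (RatFunc ℚ) i) +
          FreeAlgebra.ι (RatFunc ℚ) j)

/-- The split ıquantum group `U = U^ı(sl_{n+1})` of type `A_n`, the quotient of the free
`ℚ(q)`-algebra on `B_1, …, B_n` by the defining relations. -/
abbrev Ui (n : ℕ) := RingQuot (UiRel n)

/-- The generators `B_1, …, B_n` of `U^ı(sl_{n+1})`. -/
noncomputable def Bgen (n : ℕ) (i : Fin n) : Ui n :=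
  RingQuot.mkAlgHom (RatFunc ℚ) (UiRel n) (FreeAlgebra.ι (RatFunc ℚ) i)

/-- The words of the form `v_a v_{a+1} ⋯ v_b` : nonempty words with consecutive increasing
letters. -/
def IsSegment {n : ℕ} (l : List (Fin n)) : Prop :=
  l ≠ [] ∧ l.Chain' (fun x y : Fin n => (y : ℕ) = (x : ℕ) + 1)

/-- Auxiliary recursion (on the reversed word) for `B_{[a,b]}` : for a reversed segment
`v_b v_{b-1} ⋯ v_a`, produce `B_{[a,b]}` where `B_{[a,a]} = B_a` and
`B_{[a,b]} = B_{[a,b-1]} B_b - q B_b B_{[a,b-1]}`. -/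
noncomputable def BsegRev {n : ℕ} : List (Fin n) → Ui n
  | [] => 1
  | [i] => Bgen n i
  | i :: j :: t => BsegRev (j :: t) * Bgen n i -
      (RatFunc.X : RatFunc ℚ) • (Bgen n i * BsegRev (j :: t))

/-- `B_{[a,b]} ∈ U^ı(sl_{n+1})` attached to the segment word `v_a v_{a+1} ⋯ v_b`, defined by
`B_{[a,a]} = B_a` and `B_{[a,b]} = B_{[a,b-1]} B_b - q B_b B_{[a,b-1]}`. -/
noncomputable def Bseg {n : ℕ} (l : List (Fin n)) : Ui n := BsegRev l.reverse

namespace UiPBW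

/-! ### Root vectors and their `q`-commutation relations -/

section QBracket

variable {R A B : Type*} [CommRing R] [Ring A] [Algebra R A] [Ring B] [Algebra R B]
  {q c d : R} {x y z : A}

/-- The `q`-commutator `[x, y]_q = xy - q yx`. -/
def qBracket (q : R) (x y : A) : A := x * y - q • (y * x)

/-- `x` and `y` commute up to the scalar `c`, that is, `xy = c yx`. -/
def QCommute (c : R) (x y : A) : Prop := x * y = c • (y * x)

theorem qCommute_one_iff : QCommute (1 : R) x y ↔ Commute x y := by
  rw [QCommute, one_smul, commute_iff_eq]

theorem QCommute.mul_left (hx : QCommute c x z) (hy : QCommute d y z) :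
    QCommute (c * d) (x * y) z := by
  rw [QCommute, mul_assoc, hy, mul_smul_comm, ← mul_assoc, hx, smul_mul_assoc, smul_smul,
    mul_assoc, mul_comm c]

theorem QCommute.mul_right (hy : QCommute c x y) (hz : QCommute d x z) :
    QCommute (c * d) x (y * z) := by
  rw [QCommute, ← mul_assoc, hy, smul_mul_assoc, mul_assoc, hz, mul_smul_comm, smul_smul,
    mul_assoc]

theorem QCommute.qBracket_left (hx : QCommute c x z) (hy : QCommute d y z) :
    QCommute (c * d) (qBracket q x y) z := by
  have hxy := hx.mul_left hy
  have hyx := hy.mul_left hx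
  rw [QCommute] at hxy hyx ⊢
  rw [qBracket, sub_mul, mul_sub, smul_mul_assoc, mul_smul_comm, hxy, hyx, smul_sub, mul_comm d,
    smul_comm q]

theorem QCommute.qBracket_right (hy : QCommute c x y) (hz : QCommute d x z) :
    QCommute (c * d) x (qBracket q y z) := by
  have hyz := hy.mul_right hz
  have hzy := hz.mul_right hy
  rw [QCommute] at hyz hzy ⊢
  rw [qBracket, sub_mul, mul_sub, smul_mul_assoc, mul_smul_comm, hyz, hzy, smul_sub, mul_comm d,
    smul_comm q]

theorem commute_qBracket (hy : Commute x y) (hz : Commute x z) : Commute x (qBracket q y z) :=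
  (hy.mul_right hz).sub_right ((hz.mul_right hy).smul_right q)

theorem qBracket_qBracket_of_commute (h : Commute x z) :
    qBracket q (qBracket q x y) z = qBracket q x (qBracket q y z) := by
  have h₁ : z * (x * y) = x * (z * y) := by rw [← mul_assoc, ← h.eq, mul_assoc]
  have h₂ : y * z * x = y * x * z := by rw [mul_assoc, ← h.eq, ← mul_assoc]
  simp only [qBracket, mul_sub, sub_mul, smul_mul_assoc, mul_smul_comm, smul_sub, h₁, h₂]
  simp only [mul_assoc]
  abel

theorem map_qBracket (φ : A →ₐ[R] B) : φ (qBracket q x y) = qBracket q (φ x) (φ y) := by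
  simp only [qBracket, map_sub, map_smul, map_mul]

/-- The root vector `f_{[a, a + k]}`, the iterated `q`-commutator of `f_a, …, f_{a + k}`. Segments
are encoded by their first letter and their length minus one. -/
def rootVector (q : R) (f : ℕ → A) (a : ℕ) : ℕ → A
  | 0 => f a
  | k + 1 => qBracket q (rootVector q f a k) (f (a + k + 1))

theorem rootVector_succ (q : R) (f : ℕ → A) (a k : ℕ) :
    rootVector q f a (k + 1) = qBracket q (rootVector q f a k) (f (a + k + 1)) :=
  rfl

theorem map_rootVector (φ : A →ₐ[R] B) (f : ℕ → A) (a k : ℕ) :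
    φ (rootVector q f a k) = rootVector q (φ ∘ f) a k := by
  induction k with
  | zero => rfl
  | succ k ih => rw [rootVector, rootVector, map_qBracket, ih, Function.comp_apply]

theorem commute_rootVector {f : ℕ → A} {a k : ℕ} (h : ∀ i, a ≤ i → i ≤ a + k → Commute x (f i)) :
    Commute x (rootVector q f a k) := by
  induction k with
  | zero => exact h a le_rfl le_rfl
  | succ k ih =>
    exact commute_qBracket (ih fun i hi hi' => h i hi (by omega)) (h _ (by omega) le_rfl)

end QBracket

section Serre

variable {K A : Type*} [Field K] [Ring A] [Algebra K A] {q : K} {f : ℕ → A}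

/-- The homogeneous `q`-Serre relations of type `A_∞` for the family `f`. -/
structure IsSerre (q : K) (f : ℕ → A) : Prop where
  comm {i j : ℕ} : i + 1 < j → Commute (f i) (f j)
  serre {i j : ℕ} : i + 1 = j ∨ j + 1 = i →
    f i * f i * f j + f j * f i * f i = (q + q⁻¹) • (f i * f j * f i)

namespace IsSerre

variable (hf : IsSerre q f)
include hf

theorem commute_rootVector_of_far {a k i : ℕ} (h : a + k + 1 < i ∨ i + 1 < a) :
    Commute (f i) (rootVector q f a k) :=
  commute_rootVector fun _ _ _ => by
    rcases h with h | h
    · exact (hf.comm (by omega)).symm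
    · exact hf.comm (by omega)

theorem rootVector_split (a k m : ℕ) : rootVector q f a (k + m + 1) =
    qBracket q (rootVector q f a k) (rootVector q f (a + k + 1) m) := by
  induction m with
  | zero => rfl
  | succ m ih =>
    have hcomm := (hf.commute_rootVector_of_far (a := a) (k := k) (i := a + k + 1 + m + 1)
      (by omega)).symm
    rw [rootVector_succ q f (a + k + 1), ← qBracket_qBracket_of_commute hcomm, ← ih,
      show k + (m + 1) + 1 = (k + m + 1) + 1 by omega, rootVector_succ,
      show a + k + 1 + m + 1 = a + (k + m + 1) + 1 by omega]

theorem qCommute_first (hq : q ≠ 0) (a k : ℕ) :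
    QCommute q⁻¹ (f a) (rootVector q f a (k + 1)) := by
  induction k with
  | zero =>
    have h := hf.serre (Or.inl (rfl : a + 1 = a + 1))
    simp only [QCommute, rootVector, qBracket, add_zero, mul_sub, sub_mul, smul_mul_assoc,
      mul_smul_comm, smul_sub, smul_smul, inv_mul_cancel₀ hq, one_smul, mul_assoc] at h ⊢
    rw [sub_eq_sub_iff_add_eq_add, h, add_smul, add_comm]
  | succ k ih =>
    rw [rootVector_succ]
    simpa only [mul_one] using ih.qBracket_right (q := q)
      (qCommute_one_iff.2 (hf.comm (j := a + (k + 1) + 1) (by omega)))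

theorem qCommute_last (hq : q ≠ 0) (a k : ℕ) :
    QCommute q⁻¹ (rootVector q f a (k + 1)) (f (a + k + 1)) := by
  have base (b : ℕ) : QCommute q⁻¹ (rootVector q f b 1) (f (b + 1)) := by
    have h := hf.serre (Or.inr (rfl : b + 1 = b + 1))
    simp only [QCommute, rootVector, qBracket, add_zero, mul_sub, sub_mul, smul_mul_assoc,
      mul_smul_comm, smul_sub, smul_smul, inv_mul_cancel₀ hq, one_smul, mul_assoc] at h ⊢
    rw [sub_eq_sub_iff_add_eq_add, add_comm (f b * _), h, add_smul, add_comm]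
  cases k with
  | zero => exact base a
  | succ k =>
    have hfar := (hf.commute_rootVector_of_far (a := a) (k := k) (i := a + (k + 1) + 1)
      (by omega)).symm
    rw [hf.rootVector_split a k 1]
    simpa only [one_mul] using (qCommute_one_iff.2 hfar).qBracket_left (base (a + k + 1))

/-- After multiplication by `q + q⁻¹`, the commutator is a combination of the two Serre relations
for the middle letter. -/
theorem commute_rootVector_rank_three (hq : q ≠ 0) (hq2 : q + q⁻¹ ≠ 0) (a : ℕ) :
    Commute (f (a + 1)) (rootVector q f a 2) := by
  have serre₁ := hf.serre (Or.inr (rfl : a + 1 = a + 1))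
  have serre₂ := hf.serre (Or.inl (rfl : a + 1 + 1 = a + 1 + 1))
  have hcomm := (hf.comm (by omega : a + 1 < a + 2)).eq
  simp only [commute_iff_eq, rootVector, qBracket, add_zero, add_assoc, Nat.reduceAdd]
    at serre₁ serre₂ ⊢
  generalize f a = x at *
  generalize f (a + 1) = y at *
  generalize f (a + 2) = z at *
  have hcomm' (t : A) : z * (x * t) = x * (z * t) := by rw [← mul_assoc, ← hcomm, mul_assoc]
  have r₁ := congrArg (z * ·) serre₁
  have r₂ := congrArg (· * z) serre₁
  have r₃ := congrArg (x * ·) serre₂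
  have r₄ := congrArg (· * x) serre₂
  simp only [mul_add, add_mul, mul_sub, sub_mul, smul_mul_assoc, mul_smul_comm, smul_sub,
    mul_assoc, ← hcomm, hcomm'] at r₁ r₂ r₃ r₄ ⊢
  refine smul_right_injective A hq2 ?_
  linear_combination (norm := skip) (q ^ 2) • (r₁ - r₄) - (r₂ - r₃)
  match_scalars <;> field_simp <;> ring

theorem commute_rootVector_second (hq : q ≠ 0) (hq2 : q + q⁻¹ ≠ 0) (a k : ℕ) :
    Commute (f (a + 1)) (rootVector q f a (k + 2)) := by
  induction k with
  | zero => exact hf.commute_rootVector_rank_three hq hq2 a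
  | succ k ih => exact commute_qBracket ih (hf.comm (by omega))

theorem commute_rootVector_of_interior (hq : q ≠ 0) (hq2 : q + q⁻¹ ≠ 0) {a k i : ℕ} (hai : a < i)
    (hik : i < a + k) : Commute (f i) (rootVector q f a k) := by
  obtain ⟨j, rfl⟩ := Nat.exists_eq_add_of_lt hai
  obtain ⟨m, rfl⟩ : ∃ m, k = j + m + 2 := ⟨k - j - 2, by omega⟩
  cases j with
  | zero => simpa using hf.commute_rootVector_second hq hq2 a m
  | succ j =>
    rw [show j + 1 + m + 2 = j + (m + 2) + 1 by omega, hf.rootVector_split]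
    exact commute_qBracket (hf.commute_rootVector_of_far (by omega))
      (hf.commute_rootVector_second hq hq2 (a + j + 1) m)

theorem commute_of_far {a k c m : ℕ} (h : a + k + 1 < c) :
    Commute (rootVector q f a k) (rootVector q f c m) :=
  commute_rootVector fun _ _ _ => (hf.commute_rootVector_of_far (by omega)).symm

theorem commute_of_nested (hq : q ≠ 0) (hq2 : q + q⁻¹ ≠ 0) {a k c m : ℕ} (hac : a < c)
    (h : c + m < a + k) : Commute (rootVector q f a k) (rootVector q f c m) :=
  commute_rootVector fun _ _ _ =>
    (hf.commute_rootVector_of_interior hq hq2 (by omega) (by omega)).symm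

theorem qCommute_of_same_start (hq : q ≠ 0) (hq2 : q + q⁻¹ ≠ 0) {a k m : ℕ} (h : k < m) :
    QCommute q⁻¹ (rootVector q f a k) (rootVector q f a m) := by
  induction k with
  | zero =>
    obtain ⟨m, rfl⟩ := Nat.exists_eq_succ_of_ne_zero h.ne'
    exact hf.qCommute_first hq a m
  | succ k ih =>
    rw [rootVector_succ]
    simpa only [mul_one] using (ih (by omega)).qBracket_left (q := q) (qCommute_one_iff.2
      (hf.commute_rootVector_of_interior hq hq2 (i := a + k + 1) (by omega) (by omega)))

theorem qCommute_of_same_end (hq : q ≠ 0) (hq2 : q + q⁻¹ ≠ 0) {a k c m : ℕ} (hac : a < c)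
    (h : c + m = a + k) : QCommute q⁻¹ (rootVector q f a k) (rootVector q f c m) := by
  obtain ⟨k, rfl⟩ := Nat.exists_eq_add_one_of_ne_zero (by omega : k ≠ 0)
  have hlast := hf.qCommute_last hq a k
  cases m with
  | zero =>
    obtain rfl : c = a + k + 1 := by omega
    exact hlast
  | succ m =>
    rw [show a + k + 1 = c + m + 1 by omega] at hlast
    rw [rootVector_succ q f c]
    simpa only [one_mul] using (qCommute_one_iff.2
      (hf.commute_of_nested hq hq2 (m := m) hac (by omega))).qBracket_right hlast

/-- With `x`, `y`, `z` the root vectors of the three pieces `[a, c - 1]`, `[c, a + k]` and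
`[c, c + m]`, this is the identity `[x, y]z = z[x, y] + (q⁻¹ - q)[x, z]y`, which only uses that
`yz = q⁻¹ zy` and that `y` commutes with `[x, z]`. -/
theorem rootVector_mul_of_overlap (hq : q ≠ 0) (hq2 : q + q⁻¹ ≠ 0) {a k c m : ℕ} (hac : a < c)
    (hck : c ≤ a + k) (hkm : a + k < c + m) :
    rootVector q f a k * rootVector q f c m =
      rootVector q f c m * rootVector q f a k +
      (q⁻¹ - q) • (rootVector q f a (c + m - a) * rootVector q f c (a + k - c)) := by
  obtain ⟨j, rfl⟩ := Nat.exists_eq_add_of_lt hac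
  obtain ⟨u, rfl⟩ : ∃ u, k = j + u + 1 := ⟨k - j - 1, by omega⟩
  rw [show a + j + 1 + m - a = j + m + 1 by omega, show a + (j + u + 1) - (a + j + 1) = u by omega,
    hf.rootVector_split a j u]
  have hyz : QCommute q⁻¹ _ _ :=
    hf.qCommute_of_same_start hq hq2 (a := a + j + 1) (by omega : u < m)
  have hcomm := (hf.commute_of_nested hq hq2 (a := a) (k := j + m + 1) (c := a + j + 1) (m := u)
    (by omega) (by omega)).eq
  rw [hf.rootVector_split a j m] at hcomm ⊢
  generalize rootVector q f (a + j + 1) u = y at *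
  generalize rootVector q f (a + j + 1) m = z at *
  generalize rootVector q f a j = x at *
  have hyz' (t : A) : y * (z * t) = q⁻¹ • (z * (y * t)) := by
    rw [← mul_assoc, hyz, smul_mul_assoc, mul_assoc]
  rw [QCommute] at hyz
  simp only [qBracket, mul_sub, sub_mul, smul_mul_assoc, mul_smul_comm, smul_sub,
    mul_assoc, hyz, hyz'] at hcomm ⊢
  linear_combination (norm := skip) q • hcomm
  match_scalars <;> field_simp <;> ring

end IsSerre

end Serre

/-! ### Straightening in the homogeneous case -/

/-- The segment `[a, a + k]` of `ℕ`, encoded as the pair `(a, k)`. The lexicographic order on pairs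
is the lexicographic order on the words `a (a + 1) ⋯ (a + k)`. -/
abbrev Segment := ℕ ×ₗ ℕ

/-- The first letter of a segment. -/
def Segment.start (p : Segment) : ℕ := (ofLex p).1

/-- The length of a segment minus one. -/
def Segment.extent (p : Segment) : ℕ := (ofLex p).2

theorem Segment.extent_toLex (a k : ℕ) : Segment.extent (toLex (a, k)) = k := rfl

theorem Segment.lt_iff {p p' : Segment} :
    p < p' ↔ p.start < p'.start ∨ p.start = p'.start ∧ p.extent < p'.extent :=
  Prod.Lex.lt_iff

/-- The word `a (a + 1) ⋯ b` of the segment `[a, b]`. -/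
def word (p : Segment) : List ℕ := List.range' p.start (p.extent + 1)

/-- The concatenation of the words of a list of segments. -/
def concat (P : List Segment) : List ℕ := P.flatMap word

theorem concat_cons (p : Segment) (P : List Segment) : concat (p :: P) = word p ++ concat P :=
  List.flatMap_cons

theorem length_concat_cons (p : Segment) (P : List Segment) :
    (concat (p :: P)).length = p.extent + 1 + (concat P).length := by
  rw [concat_cons, List.length_append, word, List.length_range']

theorem length_concat_append (P Q : List Segment) :
    (concat (P ++ Q)).length = (concat P).length + (concat Q).length := by
  rw [concat, List.flatMap_append, List.length_append, concat, concat]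

theorem length_le_length_concat (P : List Segment) : P.length ≤ (concat P).length := by
  induction P with
  | nil => exact le_rfl
  | cons p P ih => rw [length_concat_cons, List.length_cons]; omega

theorem finite_setOf_length_concat_le (n d : ℕ) :
    {P : List Segment | (concat P).length ≤ d ∧ ∀ p ∈ P, p.start + p.extent < n}.Finite := by
  have hfin : {p : Segment | p.start + p.extent < n}.Finite :=
    (((Set.finite_lt_nat n).prod (Set.finite_lt_nat n)).image toLex).subset fun p (hp : _ < n) =>
      ⟨ofLex p, ⟨(Nat.le_add_right _ _).trans_lt hp, (Nat.le_add_left _ _).trans_lt hp⟩, rfl⟩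
  have := hfin.to_subtype
  refine ((List.finite_length_le {p : Segment | p.start + p.extent < n} d).image
    (List.map Subtype.val)).subset ?_
  rintro P ⟨hlen, hP⟩
  lift P to List {p : Segment // p.start + p.extent < n} using hP
  exact ⟨P, (P.length_map _).symm.trans_le ((length_le_length_concat _).trans hlen), rfl⟩

section RootMonomial

variable {R A B : Type*} [CommRing R] [Ring A] [Algebra R A] [Ring B] [Algebra R B]

/-- The product of the root vectors of a list of segments. -/
def rootMonomial (q : R) (f : ℕ → A) (P : List Segment) : A :=
  (P.map fun p => rootVector q f p.start p.extent).prod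

theorem rootMonomial_cons (q : R) (f : ℕ → A) (p : Segment) (P : List Segment) :
    rootMonomial q f (p :: P) = rootVector q f p.start p.extent * rootMonomial q f P := by
  rw [rootMonomial, List.map_cons, List.prod_cons, rootMonomial]

theorem rootMonomial_append (q : R) (f : ℕ → A) (P Q : List Segment) :
    rootMonomial q f (P ++ Q) = rootMonomial q f P * rootMonomial q f Q := by
  rw [rootMonomial, List.map_append, List.prod_append, rootMonomial, rootMonomial]

theorem rootMonomial_pair (q : R) (f : ℕ → A) (p p' : Segment) :
    rootMonomial q f [p, p'] =
      rootVector q f p.start p.extent * rootVector q f p'.start p'.extent := by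
  rw [rootMonomial, List.map_cons, List.map_singleton, List.prod_pair]

theorem map_rootMonomial {q : R} (φ : A →ₐ[R] B) (f : ℕ → A) (P : List Segment) :
    φ (rootMonomial q f P) = rootMonomial q (φ ∘ f) P := by
  simp only [rootMonomial, map_list_prod, List.map_map, Function.comp_def, map_rootVector]

theorem rootVector_congr {q : R} {f g : ℕ → A} {a k : ℕ} (h : ∀ i ≤ a + k, f i = g i) :
    rootVector q f a k = rootVector q g a k := by
  induction k with
  | zero => exact h a le_rfl
  | succ k ih => rw [rootVector, rootVector, ih fun i hi => h i (by omega), h (a + k + 1) le_rfl]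

theorem rootMonomial_congr {q : R} {f g : ℕ → A} {P : List Segment}
    (h : ∀ p ∈ P, ∀ i ≤ p.start + p.extent, f i = g i) :
    rootMonomial q f P = rootMonomial q g P :=
  congrArg _ <| List.map_congr_left fun p hp => rootVector_congr (h p hp)

theorem rootVector_eq_zero {q : R} {f : ℕ → A} {a k : ℕ} (h : f (a + k) = 0) :
    rootVector q f a k = 0 := by
  cases k with
  | zero => exact h
  | succ k => rw [rootVector_succ, add_assoc, h, qBracket, mul_zero, zero_mul, smul_zero, sub_zero]

theorem rootMonomial_eq_zero {q : R} {f : ℕ → A} {P : List Segment} {p : Segment} (hp : p ∈ P)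
    (h : f (p.start + p.extent) = 0) : rootMonomial q f P = 0 :=
  List.prod_eq_zero (List.mem_map.2 ⟨p, hp, rootVector_eq_zero h⟩)

end RootMonomial

namespace IsSerre

variable {K A : Type*} [Field K] [Ring A] [Algebra K A] {q : K} {f : ℕ → A} (hf : IsSerre q f)
include hf

theorem exists_qCommute_of_lt (hq : q ≠ 0) (hq2 : q + q⁻¹ ≠ 0) {p p' : Segment} (hlt : p < p')
    (hglue : p'.start ≠ p.start + p.extent + 1)
    (hover : ¬ (p.start < p'.start ∧ p'.start ≤ p.start + p.extent ∧
      p.start + p.extent < p'.start + p'.extent)) :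
    ∃ s : K, QCommute s (rootVector q f p.start p.extent) (rootVector q f p'.start p'.extent) := by
  rcases Segment.lt_iff.1 hlt with hac | ⟨hac, hkm⟩
  · rcases lt_trichotomy (p'.start + p'.extent) (p.start + p.extent) with hnest | hend | hfar
    · exact ⟨1, qCommute_one_iff.2 (hf.commute_of_nested hq hq2 hac hnest)⟩
    · exact ⟨_, hf.qCommute_of_same_end hq hq2 hac hend⟩
    · exact ⟨1, qCommute_one_iff.2 (hf.commute_of_far (by omega))⟩
  · exact ⟨q⁻¹, hac ▸ hf.qCommute_of_same_start hq hq2 hkm⟩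

theorem rootMonomial_pair_mem_span (hq : q ≠ 0) (hq2 : q + q⁻¹ ≠ 0) {p p' : Segment}
    (hlt : p < p') :
    rootMonomial q f [p, p'] ∈ Submodule.span K {x | ∃ r R, p < r ∧
      (concat (r :: R)).length = (concat [p, p']).length ∧ rootMonomial q f (r :: R) = x} := by
  set S : Submodule K A := Submodule.span K _
  have hlen_single (r : Segment) : (concat [r]).length = r.extent + 1 := length_concat_cons r []
  have hmem {a k : ℕ} {R : List Segment} (hr : p < toLex (a, k))
      (hlen : k + 1 + (concat R).length = p.extent + 1 + (p'.extent + 1)) :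
      rootVector q f a k * rootMonomial q f R ∈ S := by
    refine Submodule.subset_span ⟨toLex (a, k), R, hr, ?_, rootMonomial_cons q f _ R⟩
    rw [length_concat_cons, length_concat_cons, hlen_single]
    exact hlen
  have hmem_pair {a k : ℕ} {r : Segment} (hr : p < toLex (a, k))
      (hlen : k + 1 + (r.extent + 1) = p.extent + 1 + (p'.extent + 1)) :
      rootVector q f a k * rootVector q f r.start r.extent ∈ S := by
    simpa only [rootMonomial, List.map_singleton, List.prod_singleton] using
      hmem hr (R := [r]) (by rw [hlen_single, hlen])
  have hlong {l : ℕ} (hl : p.extent < l) : p < toLex (p.start, l) :=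
    Segment.lt_iff.2 (Or.inr ⟨rfl, hl⟩)
  have hswap := hmem_pair (r := p) (a := p'.start) (k := p'.extent) hlt (by omega)
  rw [rootMonomial_pair]
  by_cases hglue : p'.start = p.start + p.extent + 1
  · have hmem_glue := hmem (R := []) (hlong (l := p.extent + p'.extent + 1) (by omega))
      (by simp only [concat, List.flatMap_nil, List.length_nil]; omega)
    rw [rootMonomial, List.map_nil, List.prod_nil, mul_one, hf.rootVector_split, qBracket,
      ← hglue] at hmem_glue
    exact (Submodule.sub_mem_iff_left _ (S.smul_mem q hswap)).1 hmem_glue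
  by_cases hover : p.start < p'.start ∧ p'.start ≤ p.start + p.extent ∧
      p.start + p.extent < p'.start + p'.extent
  · obtain ⟨hac, hck, hkm⟩ := hover
    have hmem_over := hmem_pair (r := toLex (p'.start, p.start + p.extent - p'.start))
      (hlong (l := p'.start + p'.extent - p.start) (by omega)) (by rw [Segment.extent_toLex]; omega)
    rw [hf.rootVector_mul_of_overlap hq hq2 hac hck hkm]
    exact add_mem hswap (S.smul_mem _ hmem_over)
  · obtain ⟨s, hs⟩ := hf.exists_qCommute_of_lt hq hq2 hlt hglue hover
    exact hs ▸ S.smul_mem s hswap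

theorem rootMonomial_mem_span_gt (hq : q ≠ 0) (hq2 : q + q⁻¹ ≠ 0) {P : List Segment}
    (hP : ¬ P.SortedGE) : rootMonomial q f P ∈ Submodule.span K
      (rootMonomial q f '' {R | (concat R).length = (concat P).length ∧ P < R}) := by
  rw [List.sortedGE_iff_isChain, List.isChain_iff_forall_rel_of_append_cons_cons] at hP
  push Not at hP
  obtain ⟨p, p', L, R, rfl, hlt⟩ := hP
  have hpair := Submodule.mem_map_of_mem
    (f := LinearMap.mulLeftRight K (rootMonomial q f L, rootMonomial q f R))
    (hf.rootMonomial_pair_mem_span hq hq2 hlt)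
  have hsplit : L ++ p :: p' :: R = L ++ ([p, p'] ++ R) := rfl
  rw [hsplit, rootMonomial_append, rootMonomial_append, ← mul_assoc]
  refine Submodule.map_span_le _ _ _ |>.2 ?_ hpair
  rintro _ ⟨r, Q, hpr, hlen, rfl⟩
  refine Submodule.subset_span ⟨L ++ (r :: Q ++ R), ⟨?_, ?_⟩, ?_⟩
  · simp only [length_concat_append, hlen]
  · exact List.append_left_lt (List.cons_lt_cons_iff.2 (Or.inl hpr))
  · rw [rootMonomial_append, rootMonomial_append, ← mul_assoc, LinearMap.mulLeftRight_apply]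

/-- Straightening terminates because there are only finitely many lists of segments of each total
length. -/
theorem rootMonomial_mem_span_sorted (hq : q ≠ 0) (hq2 : q + q⁻¹ ≠ 0) {n : ℕ}
    (hn : ∀ i, n ≤ i → f i = 0) (P : List Segment) : rootMonomial q f P ∈ Submodule.span K
      (rootMonomial q f '' {R | R.SortedGE ∧ (concat R).length = (concat P).length}) := by
  set S : Submodule K A := Submodule.span K _
  by_contra hPS
  set bad := {R | (concat R).length = (concat P).length ∧ rootMonomial q f R ∉ S}
  have hfin : bad.Finite := by
    refine (finite_setOf_length_concat_le n (concat P).length).subset fun R hR =>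
      ⟨hR.1.le, fun p hp => ?_⟩
    by_contra! hnp
    exact hR.2 (rootMonomial_eq_zero (q := q) hp (hn _ hnp) ▸ zero_mem S)
  obtain ⟨Q, ⟨hQlen, hQS⟩, hmax⟩ := Set.exists_max_image bad id hfin ⟨P, rfl, hPS⟩
  have hQ : ¬ Q.SortedGE := fun h => hQS (Submodule.subset_span ⟨Q, ⟨h, hQlen⟩, rfl⟩)
  refine hQS (Submodule.span_le.2 ?_ (hf.rootMonomial_mem_span_gt hq hq2 hQ))
  rintro _ ⟨R, ⟨hRlen, hQR⟩, rfl⟩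
  by_contra hRS
  exact (hmax R ⟨hRlen.trans hQlen, hRS⟩).not_gt hQR

end IsSerre

/-! ### The length filtration and its Rees algebra -/

section Filtration

open Polynomial

variable {K U : Type*} [Field K] [Ring U] [Algebra K U]

/-- The Rees algebra `⨁ F_d X^d ⊆ U[X]` of a filtration `F` of the algebra `U`. -/
def reesSubalgebra (F : ℕ → Submodule K U) [SetLike.GradedMonoid F] : Subalgebra K U[X] where
  carrier := {p | ∀ d, p.coeff d ∈ F d}
  add_mem' hp hp' d := by rw [coeff_add]; exact add_mem (hp d) (hp' d)
  mul_mem' hp hp' d := by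
    rw [coeff_mul]
    exact sum_mem fun x hx =>
      Finset.HasAntidiagonal.mem_antidiagonal.1 hx ▸ SetLike.mul_mem_graded (hp _) (hp' _)
  algebraMap_mem' r d := by
    rw [Polynomial.algebraMap_apply, coeff_C]
    split_ifs with hd
    · rw [hd, Algebra.algebraMap_eq_smul_one]
      exact Submodule.smul_mem _ _ (SetLike.one_mem_graded F)
    · exact zero_mem _

/-- The filtration of the algebra generated by the `f_i` by the length of monomials. -/
def wordFiltration (K : Type*) [Field K] {U : Type*} [Ring U] [Algebra K U] (f : ℕ → U) (d : ℕ) :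
    Submodule K U :=
  Submodule.span K ((fun w : List ℕ => (w.map f).prod) '' {w | w.length ≤ d})

theorem prod_mem_wordFiltration (f : ℕ → U) {w : List ℕ} {d : ℕ} (hw : w.length ≤ d) :
    (w.map f).prod ∈ wordFiltration K f d :=
  Submodule.subset_span ⟨w, hw, rfl⟩

instance (f : ℕ → U) : SetLike.GradedMonoid (wordFiltration K f) where
  one_mem := prod_mem_wordFiltration f (w := []) le_rfl
  mul_mem d e x y hx hy := by
    have hmul : wordFiltration K f d * wordFiltration K f e ≤ wordFiltration K f (d + e) := by
      rw [wordFiltration, wordFiltration, Submodule.span_mul_span, Submodule.span_le]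
      rintro _ ⟨_, ⟨v, hv, rfl⟩, _, ⟨w, hw, rfl⟩, rfl⟩
      dsimp only
      rw [← List.prod_append, ← List.map_append]
      exact prod_mem_wordFiltration f (List.length_append.trans_le (add_le_add hv hw))
    exact hmul (Submodule.mul_mem_mul hx hy)

theorem wordFiltration_mono (f : ℕ → U) : Monotone (wordFiltration K f) := fun _ _ h =>
  Submodule.span_mono (Set.image_mono fun _ hw => le_trans hw h)

theorem mem_wordFiltration_one (f : ℕ → U) (i : ℕ) : f i ∈ wordFiltration K f 1 := by
  simpa using prod_mem_wordFiltration (K := K) f (w := [i]) le_rfl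

theorem monomial_mem_reesSubalgebra {F : ℕ → Submodule K U} [SetLike.GradedMonoid F] {d : ℕ} {x : U}
    (hx : x ∈ F d) : monomial d x ∈ reesSubalgebra F := fun e => by
  rw [coeff_monomial]
  split_ifs with h
  · exact h ▸ hx
  · exact zero_mem _

/-- The variable `X` as an element of the Rees algebra of the length filtration. -/
noncomputable def reesX (K : Type*) [Field K] {U : Type*} [Ring U] [Algebra K U] (f : ℕ → U) :
    reesSubalgebra (wordFiltration K f) :=
  ⟨monomial 1 1, monomial_mem_reesSubalgebra
    (wordFiltration_mono f zero_le_one (SetLike.one_mem_graded (wordFiltration K f)))⟩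

/-- The ideal of the Rees algebra whose quotient is the associated graded algebra. -/
noncomputable abbrev reesIdeal (K : Type*) [Field K] {U : Type*} [Ring U] [Algebra K U]
    (f : ℕ → U) : Ideal (reesSubalgebra (wordFiltration K f)) :=
  Ideal.span {reesX K f}

theorem mem_reesIdeal {f : ℕ → U} {p : reesSubalgebra (wordFiltration K f)} :
    p ∈ reesIdeal K f ↔ ∃ p' : reesSubalgebra (wordFiltration K f), p'.1 * X = p.1 := by
  simp only [reesIdeal, Ideal.mem_span_singleton', Subtype.ext_iff, MulMemClass.coe_mul]
  rfl

instance (f : ℕ → U) : (reesIdeal K f).IsTwoSided where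
  mul_mem_of_left b ha := by
    obtain ⟨a', ha⟩ := mem_reesIdeal.1 ha
    refine mem_reesIdeal.2 ⟨a' * b, ?_⟩
    rw [MulMemClass.coe_mul, MulMemClass.coe_mul, ← ha, mul_assoc, ← X_mul, mul_assoc]

theorem coeff_mem_of_mem_reesIdeal {f : ℕ → U} {p : reesSubalgebra (wordFiltration K f)}
    (hp : p ∈ reesIdeal K f) (d : ℕ) : p.1.coeff (d + 1) ∈ wordFiltration K f d := by
  obtain ⟨p', hp'⟩ := mem_reesIdeal.1 hp
  rw [← hp', coeff_mul_X]
  exact p'.2 d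

theorem mem_reesIdeal_of_eq_monomial {f : ℕ → U} {p : reesSubalgebra (wordFiltration K f)} {d : ℕ}
    {x : U} (hx : x ∈ wordFiltration K f d) (hp : p.1 = monomial (d + 1) x) :
    p ∈ reesIdeal K f :=
  mem_reesIdeal.2 ⟨⟨monomial d x, monomial_mem_reesSubalgebra hx⟩, by rw [hp, monomial_mul_X]⟩

/-- The generator `f_i X` of the Rees algebra. -/
noncomputable def reesGen (K : Type*) [Field K] {U : Type*} [Ring U] [Algebra K U] (f : ℕ → U)
    (i : ℕ) : reesSubalgebra (wordFiltration K f) :=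
  ⟨monomial 1 (f i), monomial_mem_reesSubalgebra (mem_wordFiltration_one f i)⟩

theorem coe_rootVector_reesGen (q : K) (f : ℕ → U) (a k : ℕ) :
    (rootVector q (reesGen K f) a k).1 = monomial (k + 1) (rootVector q f a k) := by
  induction k with
  | zero => rfl
  | succ k ih =>
    have h := map_qBracket (q := q) (x := rootVector q (reesGen K f) a k)
      (y := reesGen K f (a + k + 1)) (reesSubalgebra (wordFiltration K f)).val
    rw [Subalgebra.coe_val, ih] at h
    rw [rootVector_succ, h, reesGen, qBracket, monomial_mul_monomial, monomial_mul_monomial,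
      add_comm 1, smul_monomial, ← monomial_sub, rootVector_succ, qBracket]

theorem coe_rootMonomial_reesGen (q : K) (f : ℕ → U) (P : List Segment) :
    (rootMonomial q (reesGen K f) P).1 =
      monomial (concat P).length (rootMonomial q f P) := by
  induction P with
  | nil => rfl
  | cons p P ih =>
    rw [rootMonomial_cons, MulMemClass.coe_mul, ih, coe_rootVector_reesGen, monomial_mul_monomial,
      length_concat_cons, rootMonomial_cons]

/-- The `q`-Serre relations of type `A_∞` up to terms of lower degree. -/
structure IsFilteredSerre (q : K) (f : ℕ → U) : Prop where
  comm {i j : ℕ} : i + 1 < j → f i * f j - f j * f i ∈ wordFiltration K f 1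
  serre {i j : ℕ} : i + 1 = j ∨ j + 1 = i →
    f i * f i * f j + f j * f i * f i - (q + q⁻¹) • (f i * f j * f i) ∈ wordFiltration K f 2

namespace IsFilteredSerre

variable {q : K} {f : ℕ → U} (hf : IsFilteredSerre q f)
include hf

theorem isSerre : IsSerre q (Ideal.Quotient.mkₐ K (reesIdeal K f) ∘ reesGen K f) where
  comm {i j} hij := by
    simp only [Function.comp_apply, Ideal.Quotient.mkₐ_eq_mk, commute_iff_eq, ← map_mul]
    refine Ideal.Quotient.eq.2 (mem_reesIdeal_of_eq_monomial (hf.comm hij) ?_)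
    simp [reesGen, monomial_mul_monomial]
  serre {i j} hij := by
    let g := reesGen K f
    have h : Ideal.Quotient.mkₐ K (reesIdeal K f) (g i * g i * g j + g j * g i * g i) =
        Ideal.Quotient.mkₐ K (reesIdeal K f) ((q + q⁻¹) • (g i * g j * g i)) := by
      refine Ideal.Quotient.eq.2 (mem_reesIdeal_of_eq_monomial (hf.serre hij) ?_)
      change monomial 1 (f i) * monomial 1 (f i) * monomial 1 (f j) +
        monomial 1 (f j) * monomial 1 (f i) * monomial 1 (f i) -
          (q + q⁻¹) • (monomial 1 (f i) * monomial 1 (f j) * monomial 1 (f i)) = _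
      simp only [monomial_mul_monomial, smul_monomial, ← map_add, ← map_sub, Nat.reduceAdd]
    simp only [map_add, map_mul, map_smul] at h
    exact h

theorem rootMonomial_mem_span_sorted_sup (hq : q ≠ 0) (hq2 : q + q⁻¹ ≠ 0) {n d : ℕ}
    (hn : ∀ i, n ≤ i → f i = 0) {P : List Segment} (hP : (concat P).length = d + 1) :
    rootMonomial q f P ∈
      Submodule.span K (rootMonomial q f '' {R | R.SortedGE}) ⊔ wordFiltration K f d := by
  have hn' (i : ℕ) (hi : n ≤ i) : (Ideal.Quotient.mkₐ K (reesIdeal K f) ∘ reesGen K f) i = 0 := by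
    have : reesGen K f i = 0 := Subtype.ext (by simp [reesGen, hn i hi])
    rw [Function.comp_apply, this, map_zero]
  have hmem := hf.isSerre.rootMonomial_mem_span_sorted hq hq2 hn' P
  have himage : rootMonomial q (Ideal.Quotient.mkₐ K (reesIdeal K f) ∘ reesGen K f) =
      (Ideal.Quotient.mkₐ K (reesIdeal K f)).toLinearMap ∘ rootMonomial q (reesGen K f) :=
    funext fun R => (map_rootMonomial _ _ R).symm
  rw [himage, Set.image_comp, Submodule.span_image] at hmem
  obtain ⟨y, hy, hPy⟩ := hmem
  let coeffMap : reesSubalgebra (wordFiltration K f) →ₗ[K] U :=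
    (lcoeff U (d + 1)).restrictScalars K ∘ₗ (reesSubalgebra (wordFiltration K f)).val.toLinearMap
  have hcoeff {R : List Segment} (hR : (concat R).length = d + 1) :
      coeffMap (rootMonomial q (reesGen K f) R) = rootMonomial q f R := by
    change (rootMonomial q (reesGen K f) R).1.coeff (d + 1) = _
    rw [coe_rootMonomial_reesGen, hR, coeff_monomial_same]
  have hyS : coeffMap y ∈ Submodule.span K (rootMonomial q f '' {R | R.SortedGE}) := by
    refine Submodule.map_span_le _ _ _ |>.2 ?_ (Submodule.mem_map_of_mem hy)
    rintro _ ⟨R, ⟨hR, hlen⟩, rfl⟩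
    exact hcoeff (hlen.trans hP) ▸ Submodule.subset_span ⟨R, hR, rfl⟩
  have hlower := coeff_mem_of_mem_reesIdeal (Ideal.Quotient.eq.1 hPy) d
  change coeffMap (y - rootMonomial q (reesGen K f) P) ∈ _ at hlower
  rw [map_sub, hcoeff hP] at hlower
  rw [← sub_sub_cancel (coeffMap y) (rootMonomial q f P)]
  exact sub_mem (Submodule.mem_sup_left hyS) (Submodule.mem_sup_right hlower)

theorem span_rootMonomial_sorted_eq_top (hq : q ≠ 0) (hq2 : q + q⁻¹ ≠ 0) {n : ℕ}
    (hn : ∀ i, n ≤ i → f i = 0) (hgen : Algebra.adjoin K (Set.range f) = ⊤) :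
    Submodule.span K (rootMonomial q f '' {R | R.SortedGE}) = ⊤ := by
  set S := Submodule.span K (rootMonomial q f '' {R | R.SortedGE})
  have hfil (d : ℕ) : wordFiltration K f d ≤ S := by
    induction d with
    | zero =>
      refine Submodule.span_le.2 ?_
      rintro _ ⟨w, hw, rfl⟩
      obtain rfl := List.length_eq_zero_iff.1 (Nat.le_zero.1 hw)
      exact Submodule.subset_span ⟨[], List.Pairwise.nil.sortedGE, rfl⟩
    | succ d ih =>
      refine Submodule.span_le.2 ?_
      rintro _ ⟨w, hw, rfl⟩
      rcases Nat.lt_or_eq_of_le hw with hlt | hlen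
      · exact ih (prod_mem_wordFiltration f (Nat.le_of_lt_succ hlt))
      · have hletters : rootMonomial q f (w.map fun i => toLex (i, 0)) = (w.map f).prod := by
          rw [rootMonomial, List.map_map]; rfl
        have hconcat : concat (w.map fun i => toLex (i, 0)) = w := by
          rw [concat, List.flatMap_map]; exact List.flatMap_singleton' w
        have := hf.rootMonomial_mem_span_sorted_sup hq hq2 hn
          (P := w.map fun i => toLex (i, 0)) (by rw [hconcat, hlen])
        rw [hletters] at this
        exact sup_le le_rfl ih this
  rw [eq_top_iff, ← Algebra.top_toSubmodule, ← hgen, Algebra.adjoin_eq_span]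
  refine Submodule.span_le.2 fun x hx => ?_
  obtain ⟨l, hl, rfl⟩ := Submonoid.exists_list_of_mem_closure hx
  obtain ⟨w, rfl⟩ : l ∈ Set.range (List.map f) := Set.range_list_map f ▸ hl
  exact hfil w.length (prod_mem_wordFiltration f le_rfl)

end IsFilteredSerre

end Filtration

/-! ### `q`-boson algebras -/

section Weight

variable {K : Type*} [Field K]

/-- The weight `q^{-(α_i, α_j)}`, where `(α_i, α_j)` is the Cartan matrix of type `A`. -/
def wt (q : K) (i j : ℕ) : K :=
  if i = j then q⁻¹ * q⁻¹ else if i + 1 = j ∨ j + 1 = i then q else 1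

theorem wt_self (q : K) (i : ℕ) : wt q i i = q⁻¹ * q⁻¹ := if_pos rfl

theorem wt_of_adjacent (q : K) {i j : ℕ} (h : i + 1 = j ∨ j + 1 = i) : wt q i j = q := by
  rw [wt, if_neg (by omega), if_pos h]

theorem wt_of_far (q : K) {i j : ℕ} (h : i + 1 < j ∨ j + 1 < i) : wt q i j = 1 := by
  rw [wt, if_neg (by omega), if_neg (by omega)]

theorem wt_comm (q : K) (i j : ℕ) : wt q i j = wt q j i := by
  simp only [wt, eq_comm (a := i), or_comm]

end Weight

section Boson

open MulOpposite

variable {K A : Type*} [Field K] [Ring A] [Algebra K A] {q : K} {s d : ℕ → A}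

/-- The `q`-boson relations between creation operators `s_i` and annihilation operators `d_i`. -/
def IsBoson (q : K) (s d : ℕ → A) : Prop :=
  ∀ k j, d k * s j = wt q j k • (s j * d k) + if j = k then 1 else 0

namespace IsBoson

variable (h : IsBoson q s d)
include h

theorem annihilation_mul_creation_mul (k j : ℕ) (t : A) :
    d k * (s j * t) = wt q j k • (s j * (d k * t)) + if j = k then t else 0 := by
  rw [← mul_assoc, h, add_mul, smul_mul_assoc, mul_assoc, ite_mul, one_mul, zero_mul]

theorem op : IsBoson q (op ∘ d) (op ∘ s) := fun k j => by
  rw [Function.comp_apply, Function.comp_apply, ← op_mul, h, wt_comm, op_add, op_smul, op_mul,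
    apply_ite MulOpposite.op, op_one, op_zero]
  simp only [eq_comm]

theorem qCommute_commutator {i j : ℕ} (hij : i + 1 < j) (k : ℕ) :
    QCommute (wt q i k * wt q j k) (d k) (s i * s j - s j * s i) := by
  simp only [QCommute, mul_sub, sub_mul, h.annihilation_mul_creation_mul, h k, mul_add, mul_ite,
    mul_smul_comm, mul_one, mul_zero, mul_assoc]
  rcases eq_or_ne i k with rfl | hi
  · simp only [if_neg (by omega : ¬ j = i), if_true, wt_of_far q (Or.inr hij)]
    module
  rcases eq_or_ne j k with rfl | hj
  · simp only [if_neg hi, if_true, wt_of_far q (Or.inl hij)]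
    module
  · simp only [if_neg hi, if_neg hj]
    module

theorem qCommute_serre (hq : q ≠ 0) {i j : ℕ} (hij : i + 1 = j ∨ j + 1 = i) (k : ℕ) :
    QCommute (wt q i k * wt q i k * wt q j k) (d k)
      (s i * s i * s j + s j * s i * s i - (q + q⁻¹) • (s i * s j * s i)) := by
  simp only [QCommute, mul_sub, sub_mul, mul_add, add_mul, h.annihilation_mul_creation_mul, h k,
    mul_ite, smul_mul_assoc, mul_smul_comm, mul_one, mul_zero, mul_assoc]
  rcases eq_or_ne i k with rfl | hi
  · simp only [if_neg (by omega : ¬ j = i), if_true, wt_self, wt_of_adjacent q hij.symm]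
    match_scalars <;> field_simp <;> ring
  rcases eq_or_ne j k with rfl | hj
  · simp only [if_neg hi, if_true, wt_self, wt_of_adjacent q hij]
    match_scalars <;> field_simp
    ring
  · simp only [if_neg hi, if_neg hj]
    module

theorem commute_add (hs : IsSerre q s) (hd : IsSerre q d) (c : K) {i j : ℕ} (hij : i + 1 < j) :
    Commute (s i + c • d i) (s j + c • d j) := by
  have hdisjoint : Commute (s i) (d j) := by
    have := h j i
    rw [wt_of_far q (Or.inl hij), one_smul, if_neg (by omega), add_zero] at this
    exact this.symm
  have hdisjoint' : Commute (d i) (s j) := by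
    have := h i j
    rwa [wt_of_far q (Or.inr hij), one_smul, if_neg (by omega), add_zero] at this
  exact ((hs.comm hij).add_right (hdisjoint.smul_right c)).add_left
    ((hdisjoint'.add_right ((hd.comm hij).smul_right c)).smul_left c)

/-- The coefficient `(1 - q²)⁻¹` is the one for which the inhomogeneous term of the Serre relation
has coefficient one. -/
theorem serre_add (hs : IsSerre q s) (hd : IsSerre q d) (hq : q ≠ 0) (hq1 : 1 - q ^ 2 ≠ 0)
    {f : ℕ → A} (hf : ∀ i, f i = s i + (1 - q ^ 2)⁻¹ • d i) {i j : ℕ}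
    (hij : i + 1 = j ∨ j + 1 = i) :
    f i * f i * f j + f j * f i * f i = (q + q⁻¹) • (f i * f j * f i) + f j := by
  have hs' := hs.serre hij
  have hd' := hd.serre hij
  simp only [mul_assoc] at hs' hd'
  simp only [hf, add_mul, mul_add, smul_mul_assoc, mul_smul_comm, mul_assoc,
    h.annihilation_mul_creation_mul, h _ _, if_neg (by omega : ¬ i = j),
    if_neg (by omega : ¬ j = i), wt_of_adjacent q hij, wt_of_adjacent q hij.symm, wt_self, if_true,
    mul_one, one_mul, add_zero]
  linear_combination (norm := skip) hs' + ((1 - q ^ 2)⁻¹) ^ 3 • hd'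
  match_scalars <;> field_simp <;> ring

end IsBoson

end Boson

/-! ### The `q`-shuffle algebra -/

section Shuffle

variable {K : Type*} [Field K]

/-- The weight of the word `l` against the letter `k`. -/
def wordWt (q : K) (l : List ℕ) (k : ℕ) : K := (l.map fun i => wt q i k).prod

/-- Deletion of the first letter `k` from (possibly infinite) linear combinations of words. -/
def deletion (K : Type*) [Field K] (k : ℕ) : Module.End K (List ℕ → K) :=
  LinearMap.funLeft K K (List.cons k)

/-- The coefficient of the word `w` in the `q`-shuffle product of the word `l` with a (possibly
infinite) linear combination of words. -/
def shuffleCoeff (q : K) : List ℕ → List ℕ → (List ℕ → K) →ₗ[K] K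
  | w, [] => LinearMap.proj w
  | [], _ :: _ => 0
  | k :: w, j :: l => wordWt q (j :: l) k • (shuffleCoeff q w (j :: l) ∘ₗ deletion K k) +
      if j = k then shuffleCoeff q w l else 0

/-- Left `q`-shuffle multiplication by the word `l`. -/
def shuffleMul (q : K) (l : List ℕ) : Module.End K (List ℕ → K) :=
  LinearMap.pi fun w => shuffleCoeff q w l

theorem shuffleMul_nil (q : K) : shuffleMul q [] = 1 := by
  ext φ w
  cases w <;> rfl

theorem shuffleMul_cons_apply_nil (q : K) (j : ℕ) (l : List ℕ) (φ : List ℕ → K) :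
    shuffleMul q (j :: l) φ [] = 0 :=
  rfl

theorem deletion_mul_shuffleMul (q : K) (k j : ℕ) (l : List ℕ) :
    deletion K k * shuffleMul q (j :: l) =
      wordWt q (j :: l) k • (shuffleMul q (j :: l) * deletion K k) +
        if j = k then shuffleMul q l else 0 := by
  refine LinearMap.ext fun φ => funext fun w => ?_
  change shuffleCoeff q (k :: w) (j :: l) φ = _
  rw [shuffleCoeff]
  split_ifs <;> rfl

theorem isBoson_shuffleMul (q : K) :
    IsBoson q (fun i => shuffleMul q [i]) (deletion K) := fun k j => by
  rw [deletion_mul_shuffleMul, shuffleMul_nil, wordWt, List.map_singleton, List.prod_singleton]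

theorem eq_zero_of_qCommute_deletion {D : Module.End K (List ℕ → K)} (hnil : ∀ φ, D φ [] = 0)
    (hD : ∀ k, ∃ c : K, QCommute c (deletion K k) D) : D = 0 := by
  refine LinearMap.ext fun φ => funext fun w => ?_
  induction w generalizing φ with
  | nil => exact hnil φ
  | cons k w ih =>
    obtain ⟨c, hc⟩ := hD k
    have := congrFun (LinearMap.congr_fun hc φ) w
    change D φ (k :: w) = c * D (deletion K k φ) w at this
    rw [this, ih]
    exact mul_zero c

theorem isSerre_shuffleMul {q : K} (hq : q ≠ 0) : IsSerre q fun i => shuffleMul q [i] where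
  comm {i j} hij := by
    refine sub_eq_zero.1 (eq_zero_of_qCommute_deletion (fun _ => ?_) fun k =>
      ⟨_, (isBoson_shuffleMul q).qCommute_commutator hij k⟩)
    exact sub_self (0 : K)
  serre {i j} hij := by
    refine sub_eq_zero.1 (eq_zero_of_qCommute_deletion (fun φ => ?_) fun k =>
      ⟨_, (isBoson_shuffleMul q).qCommute_serre hq hij k⟩)
    change (0 : K) + 0 - (q + q⁻¹) * 0 = 0
    ring

/-- The empty word, as a linear combination of words. -/
def emptyWord (K : Type*) [Field K] : List ℕ → K := Pi.single [] 1

theorem deletion_emptyWord (k : ℕ) : deletion K k (emptyWord K) = 0 :=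
  funext fun w => Pi.single_eq_of_ne (M := fun _ => K) (List.cons_ne_nil k w) 1

/-- The subalgebra of the `q`-shuffle algebra generated by the letters. -/
def letterSubmodule (q : K) : Submodule K (List ℕ → K) :=
  sInf {N | emptyWord K ∈ N ∧ ∀ i, ∀ x ∈ N, shuffleMul q [i] x ∈ N}

theorem letterSubmodule_le {q : K} {N : Submodule K (List ℕ → K)} (hN : emptyWord K ∈ N)
    (hN' : ∀ i, ∀ x ∈ N, shuffleMul q [i] x ∈ N) : letterSubmodule q ≤ N :=
  sInf_le ⟨hN, hN'⟩

theorem emptyWord_mem_letterSubmodule (q : K) : emptyWord K ∈ letterSubmodule q :=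
  Submodule.mem_sInf.2 fun _ hN => hN.1

theorem shuffleMul_mem_letterSubmodule {q : K} (i : ℕ) :
    ∀ x ∈ letterSubmodule q, shuffleMul q [i] x ∈ letterSubmodule q := fun x hx =>
  Submodule.mem_sInf.2 fun N hN => hN.2 i x (Submodule.mem_sInf.1 hx N hN)

theorem deletion_mem_letterSubmodule {q : K} (k : ℕ) :
    ∀ x ∈ letterSubmodule q, deletion K k x ∈ letterSubmodule q := by
  suffices letterSubmodule q ≤ letterSubmodule q ⊓ (letterSubmodule q).comap (deletion K k) from
    fun x hx => (this hx).2
  refine letterSubmodule_le ⟨emptyWord_mem_letterSubmodule q, ?_⟩ fun i x hx =>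
    ⟨shuffleMul_mem_letterSubmodule i x hx.1, ?_⟩
  · rw [SetLike.mem_coe, Submodule.mem_comap, deletion_emptyWord]
    exact zero_mem _
  · rw [SetLike.mem_coe, Submodule.mem_comap, ← Module.End.mul_apply, isBoson_shuffleMul q k i]
    refine add_mem (Submodule.smul_mem _ _ (shuffleMul_mem_letterSubmodule i _ hx.2)) ?_
    split_ifs
    · exact hx.1
    · exact zero_mem _

theorem letterSubmodule_le_ker {q : K} {D : Module.End K (List ℕ → K)} (hD : D (emptyWord K) = 0)
    (hD' : ∀ k, ∃ c : K, QCommute c D (shuffleMul q [k])) :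
    letterSubmodule q ≤ LinearMap.ker D :=
  letterSubmodule_le hD fun i x hx => by
    obtain ⟨c, hc⟩ := hD' i
    rw [LinearMap.mem_ker, ← Module.End.mul_apply, hc, LinearMap.smul_apply, Module.End.mul_apply,
      LinearMap.mem_ker.1 hx, map_zero, smul_zero]

/-- Multiplication by the letter `i` on the subalgebra generated by the letters. -/
def creation (q : K) (i : ℕ) : Module.End K (letterSubmodule q) :=
  (shuffleMul q [i]).restrict (shuffleMul_mem_letterSubmodule i)

/-- Deletion of the first letter `i` on the subalgebra generated by the letters. -/
def annihilation (q : K) (i : ℕ) : Module.End K (letterSubmodule q) :=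
  (deletion K i).restrict (deletion_mem_letterSubmodule i)

theorem isBoson_creation_annihilation (q : K) : IsBoson q (creation q) (annihilation q) :=
  fun k j => LinearMap.ext fun x => Subtype.ext <| by
    have := LinearMap.congr_fun (isBoson_shuffleMul q k j) x
    split_ifs at this ⊢ <;> exact this

theorem isSerre_creation {q : K} (hq : q ≠ 0) : IsSerre q (creation q) where
  comm hij := LinearMap.ext fun x => Subtype.ext
    (LinearMap.congr_fun ((isSerre_shuffleMul hq).comm hij).eq x.1)
  serre hij := LinearMap.ext fun x => Subtype.ext
    (LinearMap.congr_fun ((isSerre_shuffleMul hq).serre hij) x.1)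

/-- The `q`-boson relations are symmetric under exchanging creation and annihilation and passing
to the opposite algebra, so the Serre elements of the deletions skew-commute with the letters. -/
theorem isSerre_annihilation {q : K} (hq : q ≠ 0) : IsSerre q (annihilation q) where
  comm {i j} hij := by
    have hker := letterSubmodule_le_ker (q := q)
      (D := deletion K j * deletion K i - deletion K i * deletion K j)
      (by simp [deletion_emptyWord]) fun k =>
        ⟨_, congrArg MulOpposite.unop ((isBoson_shuffleMul q).op.qCommute_commutator hij k)⟩
    exact LinearMap.ext fun x => Subtype.ext (sub_eq_zero.1 (hker x.2)).symm
  serre {i j} hij := by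
    have hker := letterSubmodule_le_ker (q := q)
      (D := deletion K j * (deletion K i * deletion K i) +
        deletion K i * (deletion K i * deletion K j) -
        (q + q⁻¹) • (deletion K i * (deletion K j * deletion K i)))
      (by simp [deletion_emptyWord]) fun k =>
        ⟨_, congrArg MulOpposite.unop ((isBoson_shuffleMul q).op.qCommute_serre hq hij k)⟩
    refine LinearMap.ext fun x => Subtype.ext ?_
    rw [add_comm]
    exact sub_eq_zero.1 (hker x.2)

/-- The operator by which the generator `B_i` acts on the shuffle model. -/
def shuffleGen (q : K) (i : ℕ) : Module.End K (letterSubmodule q) :=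
  creation q i + (1 - q ^ 2)⁻¹ • annihilation q i

end Shuffle

/-! ### Leading terms of products of root vectors -/

/-- `IsInterleaving l z w` says that the word `w` is an interleaving of the words `l` and `z`. -/
inductive IsInterleaving : List ℕ → List ℕ → List ℕ → Prop
  | nil (z : List ℕ) : IsInterleaving [] z z
  | left {l z w : List ℕ} (k : ℕ) : IsInterleaving l z w → IsInterleaving (k :: l) z (k :: w)
  | right {l z w : List ℕ} (k : ℕ) : IsInterleaving l z w → IsInterleaving l (k :: z) (k :: w)

theorem IsInterleaving.length_eq {l z w : List ℕ} (h : IsInterleaving l z w) :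
    w.length = l.length + z.length := by
  induction h with
  | nil z => simp
  | left k _ ih => simp only [List.length_cons, ih]; omega
  | right k _ ih => simp only [List.length_cons, ih]; omega

section LeadingTerm

variable {K : Type*} [Field K]

theorem exists_isInterleaving_of_shuffleMul_ne_zero {q : K} {l w : List ℕ} {φ : List ℕ → K}
    (h : shuffleMul q l φ w ≠ 0) : ∃ z, φ z ≠ 0 ∧ IsInterleaving l z w := by
  induction w generalizing l φ with
  | nil =>
    cases l with
    | nil => exact ⟨[], h, .nil []⟩
    | cons j l => exact absurd (shuffleMul_cons_apply_nil q j l φ) h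
  | cons k w ih =>
    cases l with
    | nil => exact ⟨k :: w, h, .nil _⟩
    | cons j l =>
      have hdel := congrFun (LinearMap.congr_fun (deletion_mul_shuffleMul q k j l) φ) w
      change shuffleMul q (j :: l) φ (k :: w) =
        wordWt q (j :: l) k * shuffleMul q (j :: l) (deletion K k φ) w + _ at hdel
      by_cases hright : shuffleMul q (j :: l) (deletion K k φ) w = 0
      · rw [hdel, hright, mul_zero, zero_add] at h
        split_ifs at h with hjk
        · obtain ⟨z, hz, hw⟩ := ih h
          exact ⟨z, hz, hjk ▸ hw.left j⟩
        · exact absurd rfl h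
      · obtain ⟨z, hz, hw⟩ := ih hright
        exact ⟨k :: z, hz, hw.right k⟩

theorem shuffleMul_apply_congr (q : K) {l w : List ℕ} {φ ψ : List ℕ → K}
    (h : ∀ z : List ℕ, w.length = l.length + z.length → φ z = ψ z) :
    shuffleMul q l φ w = shuffleMul q l ψ w := by
  by_contra hne
  rw [← ne_eq, ← sub_ne_zero, ← Pi.sub_apply, ← map_sub] at hne
  obtain ⟨z, hz, hw⟩ := exists_isInterleaving_of_shuffleMul_ne_zero hne
  exact hz (sub_eq_zero.2 (h z hw.length_eq))

theorem wordWt_range' (q : K) (a k : ℕ) : wordWt q (List.range' a (k + 1)) (a + k + 1) = q := by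
  induction k generalizing a with
  | zero => simp [wordWt, wt_of_adjacent]
  | succ k ih =>
    rw [List.range'_succ, wordWt, List.map_cons, List.prod_cons, wt_of_far q (by omega), one_mul,
      show a + (k + 1) + 1 = a + 1 + k + 1 by omega]
    exact ih (a + 1)

/-- Both sides have the same commutator with every deletion, provided that the words without their
first letter satisfy the relation `htail`. -/
theorem qBracket_shuffleMul_cons {q : K} {a b : ℕ} (hab : a < b) {l : List ℕ}
    (hl : wordWt q (a :: l) b = q)
    (htail : shuffleMul q l * shuffleMul q [b] =
      (q * wt q b a) • (shuffleMul q [b] * shuffleMul q l) +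
        (1 - q ^ 2) • shuffleMul q (l ++ [b])) :
    qBracket q (shuffleMul q (a :: l)) (shuffleMul q [b]) =
      (1 - q ^ 2) • shuffleMul q (a :: l ++ [b]) := by
  refine sub_eq_zero.1 (eq_zero_of_qCommute_deletion (fun φ => ?_) fun j =>
    ⟨wordWt q (a :: l) j * wt q b j, ?_⟩)
  · change (0 : K) - q * 0 - (1 - q ^ 2) * 0 = 0
    ring
  have hdel := deletion_mul_shuffleMul q j a l
  have hdel' := deletion_mul_shuffleMul q j a (l ++ [b])
  have hdelb := isBoson_shuffleMul q j b
  have hwt : wordWt q (a :: (l ++ [b])) j = wordWt q (a :: l) j * wt q b j := by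
    simp [wordWt, mul_assoc]
  rw [hwt] at hdel'
  dsimp only at hdelb
  simp only [QCommute, qBracket, List.cons_append, mul_sub, sub_mul, smul_mul_assoc, mul_smul_comm]
  rw [hdel', ← mul_assoc, ← mul_assoc, hdel, hdelb]
  simp only [add_mul, smul_mul_assoc, mul_assoc, hdel, hdelb, mul_add, mul_smul_comm]
  rcases eq_or_ne a j with rfl | ha
  · simp only [if_neg hab.ne', if_true, mul_zero, zero_mul, htail]
    module
  rcases eq_or_ne b j with rfl | hb
  · simp only [if_neg ha, if_true, mul_zero, zero_mul, mul_one, one_mul, hl]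
    module
  · simp only [if_neg ha, if_neg hb, mul_zero, zero_mul]
    module

theorem qBracket_shuffleMul (q : K) (a k : ℕ) :
    qBracket q (shuffleMul q (List.range' a (k + 1))) (shuffleMul q [a + k + 1]) =
      (1 - q ^ 2) • shuffleMul q (List.range' a (k + 2)) := by
  induction k generalizing a with
  | zero =>
    refine qBracket_shuffleMul_cons (l := []) (Nat.lt_succ_self a) (wordWt_range' q a 0) ?_
    rw [shuffleMul_nil, one_mul, mul_one, wt_of_adjacent q (Or.inr rfl), List.nil_append]
    module
  | succ k ih =>
    rw [List.range'_1_concat (n := k + 1 + 1)]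
    refine qBracket_shuffleMul_cons (l := List.range' (a + 1) (k + 1)) (by omega)
      (wordWt_range' q a (k + 1)) ?_
    rw [wt_of_far q (by omega), mul_one, show a + (k + 1) + 1 = a + 1 + k + 1 by omega,
      show a + 1 + k + 1 = a + 1 + (k + 1) by omega, ← List.range'_1_concat, ← ih (a + 1), qBracket]
    exact (add_sub_cancel _ _).symm

/-- `φ` is supported on words of length at most `d`. -/
def DegreeLE (d : ℕ) (φ : List ℕ → K) : Prop := ∀ w : List ℕ, d < w.length → φ w = 0

/-- The operator `T` is `c` times the `q`-shuffle multiplication by `l`, up to terms which raise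
the degree by less than the length of `l`. -/
def HasLeadingTerm {q : K} (T : Module.End K (letterSubmodule q)) (c : K) (l : List ℕ) : Prop :=
  ∀ ⦃d φ⦄, DegreeLE d φ.1 → ∀ ⦃w : List ℕ⦄, d + l.length ≤ w.length →
    (T φ).1 w = c * shuffleMul q l φ.1 w

namespace HasLeadingTerm

variable {q c c' : K} {T T' : Module.End K (letterSubmodule q)} {l l' : List ℕ}

theorem degreeLE (h : HasLeadingTerm T c l) {d : ℕ} {φ : letterSubmodule q}
    (hφ : DegreeLE d φ.1) : DegreeLE (d + l.length) (T φ).1 := fun w hw => by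
  rw [h hφ hw.le, shuffleMul_apply_congr q (ψ := 0) fun z hz => hφ z (by omega), map_zero]
  exact mul_zero c

theorem mul_apply (h : HasLeadingTerm T c l) (h' : HasLeadingTerm T' c' l') {d : ℕ}
    {φ : letterSubmodule q} (hφ : DegreeLE d φ.1) {w : List ℕ}
    (hw : d + l'.length + l.length ≤ w.length) :
    (T (T' φ)).1 w = c * (c' * shuffleMul q l (shuffleMul q l' φ.1) w) := by
  rw [h (h'.degreeLE hφ) hw, shuffleMul_apply_congr q (ψ := c' • shuffleMul q l' φ.1)
    fun z hz => h' hφ (by omega), map_smul]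
  rfl

end HasLeadingTerm

theorem hasLeadingTerm_shuffleGen (q : K) (i : ℕ) : HasLeadingTerm (shuffleGen q i) 1 [i] :=
  fun d φ hφ w hw => by
    have hdel : φ.1 (i :: w) = 0 :=
      hφ _ (by simp only [List.length_cons, List.length_nil] at *; omega)
    change shuffleMul q [i] φ.1 w + (1 - q ^ 2)⁻¹ * φ.1 (i :: w) = _
    rw [hdel, mul_zero, add_zero, one_mul]

theorem hasLeadingTerm_rootVector (q : K) (a k : ℕ) :
    HasLeadingTerm (rootVector q (shuffleGen q) a k) ((1 - q ^ 2) ^ k)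
      (List.range' a (k + 1)) := by
  induction k with
  | zero => exact (pow_zero (1 - q ^ 2)).symm ▸ hasLeadingTerm_shuffleGen q a
  | succ k ih =>
    intro d φ hφ w hw
    rw [List.length_range'] at hw
    have hlast := hasLeadingTerm_shuffleGen q (a + k + 1)
    have hleft := ih.mul_apply hlast hφ (w := w)
      (by rw [List.length_singleton, List.length_range']; omega)
    have hright := hlast.mul_apply ih hφ (w := w)
      (by rw [List.length_singleton, List.length_range']; omega)
    have hglue := congrFun (LinearMap.congr_fun (qBracket_shuffleMul q a k) φ.1) w
    change _ - q * _ = (1 - q ^ 2) * _ at hglue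
    change (rootVector q (shuffleGen q) a k (shuffleGen q (a + k + 1) φ)).1 w -
      q * (shuffleGen q (a + k + 1) (rootVector q (shuffleGen q) a k φ)).1 w = _
    rw [hleft, hright]
    simp only [Module.End.mul_apply] at hglue
    linear_combination (1 - q ^ 2) ^ k * hglue

/-- The product of the words of a list of segments in the `q`-shuffle algebra. -/
def shuffleProd (q : K) (P : List Segment) : List ℕ → K :=
  P.foldr (fun p => shuffleMul q (word p)) (emptyWord K)

/-- The empty word as an element of the subalgebra generated by the letters. -/
def vacuum (q : K) : letterSubmodule q := ⟨emptyWord K, emptyWord_mem_letterSubmodule q⟩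

theorem degreeLE_rootMonomial_vacuum (q : K) (P : List Segment) :
    DegreeLE (concat P).length (rootMonomial q (shuffleGen q) P (vacuum q)).1 := by
  induction P with
  | nil => exact fun w hw => Pi.single_eq_of_ne (List.ne_nil_of_length_pos hw) _
  | cons p P ih =>
    have := (hasLeadingTerm_rootVector q p.start p.extent).degreeLE ih
    rwa [List.length_range', add_comm, ← length_concat_cons, ← Module.End.mul_apply,
      ← rootMonomial_cons] at this

theorem exists_rootMonomial_vacuum_apply_eq {q : K} (hq : 1 - q ^ 2 ≠ 0) (P : List Segment) :
    ∃ c : K, c ≠ 0 ∧ ∀ w : List ℕ, (concat P).length ≤ w.length →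
      (rootMonomial q (shuffleGen q) P (vacuum q)).1 w = c * shuffleProd q P w := by
  induction P with
  | nil => exact ⟨1, one_ne_zero, fun w _ => (one_mul _).symm⟩
  | cons p P ih =>
    obtain ⟨c, hc, ih⟩ := ih
    refine ⟨(1 - q ^ 2) ^ p.extent * c, mul_ne_zero (pow_ne_zero _ hq) hc, fun w hw => ?_⟩
    rw [length_concat_cons] at hw
    rw [rootMonomial_cons, Module.End.mul_apply,
      hasLeadingTerm_rootVector q _ _ (degreeLE_rootMonomial_vacuum q P)
        (by rw [List.length_range']; omega),
      shuffleMul_apply_congr q (ψ := c • shuffleProd q P)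
        fun z hz => ih z (by rw [List.length_range'] at hz; omega),
      map_smul, mul_assoc]
    rfl

end LeadingTerm

/-! ### Leading words of products of segments -/

theorem IsInterleaving.eq_of_nil {z w : List ℕ} (h : IsInterleaving [] z w) : z = w := by
  generalize hl : ([] : List ℕ) = l at h
  induction h with
  | nil z => rfl
  | left => cases hl
  | right k _ ih => rw [ih hl]

/-- `IsShuffle M w` says that the word `w` is a shuffle of the words of the segments in `M`. -/
inductive IsShuffle : Multiset Segment → List ℕ → Prop
  | nil : IsShuffle 0 []
  | last {M : Multiset Segment} {w : List ℕ} (a : ℕ) :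
      IsShuffle M w → IsShuffle (toLex (a, 0) ::ₘ M) (a :: w)
  | head {M : Multiset Segment} {w : List ℕ} (a k : ℕ) :
      IsShuffle (toLex (a + 1, k) ::ₘ M) w → IsShuffle (toLex (a, k + 1) ::ₘ M) (a :: w)

theorem IsInterleaving.isShuffle {a k : ℕ} {z w : List ℕ}
    (h : IsInterleaving (List.range' a (k + 1)) z w) {M : Multiset Segment} (hz : IsShuffle M z) :
    IsShuffle (toLex (a, k) ::ₘ M) w := by
  generalize hl : List.range' a (k + 1) = l at h
  induction h generalizing a k M with
  | nil z => cases hl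
  | left b h ih =>
    rw [List.range'_succ, List.cons.injEq] at hl
    obtain ⟨rfl, hl⟩ := hl
    cases k with
    | zero =>
      rw [← hl] at h
      exact (h.eq_of_nil ▸ hz).last a
    | succ k => exact (ih hz hl).head a k
  | right b _ ih =>
    cases hz with
    | last _ hz => exact Multiset.cons_swap _ _ _ ▸ (ih hz hl).last b
    | head _ j hz =>
      exact Multiset.cons_swap _ _ _ ▸ (Multiset.cons_swap _ _ _ ▸ ih hz hl).head b j

theorem concat_cons_lt {p p' : Segment} {P P' : List Segment} (h : p < p')
    (hP : ∀ r ∈ P.head?, r.start ≤ p'.start) : concat (p :: P) < concat (p' :: P') := by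
  rw [concat_cons, concat_cons, word, word]
  rcases Segment.lt_iff.1 h with hlt | ⟨heq, hlt⟩
  · rw [List.range'_succ, List.range'_succ]
    exact List.Lex.rel hlt
  obtain ⟨j, hj⟩ := Nat.exists_eq_add_of_lt hlt
  have hsplit : List.range' p'.start (p'.extent + 1) =
      List.range' p'.start (p.extent + 1) ++ List.range' (p'.start + (p.extent + 1)) (j + 1) := by
    rw [List.range'_append_1]
    congr 1
    omega
  rw [hsplit, heq, List.append_assoc, List.range'_succ (n := j)]
  refine List.append_left_lt (α := ℕ) ?_
  cases P with
  | nil => exact List.nil_lt_cons _ _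
  | cons r P =>
    have hr := hP r rfl
    rw [concat_cons, word, List.range'_succ]
    exact List.Lex.rel (by omega)

theorem injOn_concat : Set.InjOn concat {P | P.SortedGE} := by
  have concat_cons_ne {p p' : Segment} {P P' : List Segment} (hP : (p :: P).SortedGE)
      (h : p < p') : concat (p :: P) ≠ concat (p' :: P') :=
    (concat_cons_lt h fun r hr => Prod.Lex.monotone_fst r p' ((List.rel_of_pairwise_cons
      hP.pairwise (List.mem_of_mem_head? hr)).trans h.le)).ne
  intro P hP P' hP' h
  induction P generalizing P' with
  | nil =>
    cases P' with
    | nil => rfl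
    | cons p' P' => cases h
  | cons p P ih =>
    cases P' with
    | nil => cases h
    | cons p' P' =>
      obtain rfl : p = p' := by
        by_contra hne
        rcases lt_or_gt_of_ne hne with hlt | hgt
        exacts [concat_cons_ne hP hlt h, concat_cons_ne hP' hgt h.symm]
      rw [concat_cons, concat_cons, List.append_right_inj] at h
      rw [ih hP.pairwise.of_cons.sortedGE hP'.pairwise.of_cons.sortedGE h]

theorem concat_cons_le_orderedInsert (p : Segment) (P : List Segment) :
    concat (p :: P) ≤ concat (P.orderedInsert (· ≥ ·) p) := by
  cases P with
  | nil => exact le_rfl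
  | cons r P =>
    rw [List.orderedInsert_cons]
    split_ifs with hr
    · exact le_rfl
    · refine (concat_cons_lt (not_le.1 hr) fun r' hr' => ?_).le
      rw [List.head?_cons, Option.mem_some_iff] at hr'
      exact hr' ▸ le_rfl

theorem cons_concat_orderedInsert_le (a k : ℕ) (P : List Segment) :
    a :: concat (P.orderedInsert (· ≥ ·) (toLex (a + 1, k))) ≤
      concat (P.orderedInsert (· ≥ ·) (toLex (a, k + 1))) := by
  have hcons (P : List Segment) :
      a :: concat (toLex (a + 1, k) :: P) = concat (toLex (a, k + 1) :: P) := rfl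
  cases P with
  | nil => exact (hcons []).le
  | cons r P =>
    by_cases hr : r ≤ toLex (a + 1, k)
    · rw [List.orderedInsert_cons, if_pos hr, hcons]
      exact concat_cons_le_orderedInsert _ _
    · have hr' : ¬ r ≤ toLex (a, k + 1) := fun h =>
        hr (h.trans (Prod.Lex.toLex_lt_toLex.2 (.inl a.lt_succ_self)).le)
      rw [List.orderedInsert_cons (· ≥ ·) (toLex (a, k + 1)), if_neg hr', concat_cons r, word,
        List.range'_succ]
      have hlt : a + 1 ≤ r.start := Prod.Lex.monotone_fst _ _ (not_le.1 hr).le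
      exact le_of_lt (List.Lex.rel hlt)

theorem sort_cons_eq_orderedInsert (p : Segment) (M : Multiset Segment) :
    (p ::ₘ M).sort (· ≥ ·) = (M.sort (· ≥ ·)).orderedInsert (· ≥ ·) p := by
  refine List.Perm.eq_of_sortedGE (Multiset.pairwise_sort _ _).sortedGE
    ((Multiset.pairwise_sort _ _).orderedInsert _ _).sortedGE (Multiset.coe_eq_coe.1 ?_)
  rw [Multiset.sort_eq, Multiset.coe_eq_coe.2 (List.perm_orderedInsert _ _ _),
    ← Multiset.cons_coe, Multiset.sort_eq]

theorem IsShuffle.le_concat_sort {M : Multiset Segment} {w : List ℕ} (h : IsShuffle M w) :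
    w ≤ concat (M.sort (· ≥ ·)) := by
  induction h with
  | nil => rw [Multiset.sort_zero, concat, List.flatMap_nil]
  | last a _ ih =>
    rw [sort_cons_eq_orderedInsert]
    exact le_trans (b := a :: concat _) (List.cons_le_cons a ih)
      (concat_cons_le_orderedInsert (toLex (a, 0)) _)
  | head a k _ ih =>
    rw [sort_cons_eq_orderedInsert] at ih ⊢
    exact le_trans (List.cons_le_cons a ih) (cons_concat_orderedInsert_le _ _ _)

theorem isShuffle_of_shuffleProd_ne_zero {K : Type*} [Field K] {q : K} {P : List Segment}
    {w : List ℕ} (h : shuffleProd q P w ≠ 0) : IsShuffle P w := by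
  induction P generalizing w with
  | nil =>
    obtain rfl : w = [] := by
      by_contra hw
      exact h (Pi.single_eq_of_ne hw 1)
    exact .nil
  | cons p P ih =>
    obtain ⟨z, hz, hw⟩ := exists_isInterleaving_of_shuffleMul_ne_zero h
    exact hw.isShuffle (ih hz)

theorem le_concat_of_shuffleProd_ne_zero {K : Type*} [Field K] {q : K} {P : List Segment}
    (hP : P.SortedGE) {w : List ℕ} (h : shuffleProd q P w ≠ 0) : w ≤ concat P := by
  have hle := (isShuffle_of_shuffleProd_ne_zero h).le_concat_sort
  rwa [(Multiset.coe_eq_coe.1 (Multiset.sort_eq (P : Multiset Segment) (· ≥ ·))).eq_of_sortedGE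
    (Multiset.pairwise_sort _ _).sortedGE hP] at hle

/-! ### Linear independence of the products of root vectors -/

theorem linearIndependent_of_triangular {ι κ K M : Type*} [LinearOrder κ] [CommRing K]
    [NoZeroDivisors K] [AddCommGroup M] [Module K M] {v : ι → M} (f : ι → M →ₗ[K] K) {key : ι → κ}
    (hkey : Function.Injective key) (hdiag : ∀ i, f i (v i) ≠ 0)
    (htri : ∀ i j, key j < key i → f i (v j) = 0) : LinearIndependent K v := by
  classical
  rw [linearIndependent_iff']
  intro s g hg
  by_contra! hne
  obtain ⟨j, hj, hgj⟩ := hne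
  obtain ⟨i, hi, hmax⟩ := (s.filter (g · ≠ 0)).exists_max_image key
    ⟨j, Finset.mem_filter.2 ⟨hj, hgj⟩⟩
  rw [Finset.mem_filter] at hi
  refine mul_ne_zero hi.2 (hdiag i) ?_
  rw [← map_zero (f i), ← hg, map_sum, Finset.sum_eq_single_of_mem i hi.1, map_smul, smul_eq_mul]
  intro j hj hji
  by_cases hgj : g j = 0
  · rw [hgj, zero_smul, map_zero]
  · rw [map_smul, htri i j ((hmax j (Finset.mem_filter.2 ⟨hj, hgj⟩)).lt_of_ne (hkey.ne hji)),
      smul_zero]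

section Positivity

variable {K : Type*} [Field K] [LinearOrder K] [IsStrictOrderedRing K] {q : K}

theorem one_sub_sq_ne_zero (hq : 0 < q) (hq1 : q ≠ 1) : 1 - q ^ 2 ≠ 0 := by
  rw [sub_ne_zero, ne_comm, ne_eq, pow_eq_one_iff_of_nonneg hq.le two_ne_zero]
  exact hq1

theorem wordWt_pos (hq : 0 < q) (l : List ℕ) (k : ℕ) : 0 < wordWt q l k := by
  refine List.prod_pos fun x hx => ?_
  obtain ⟨i, -, rfl⟩ := List.mem_map.1 hx
  unfold wt
  split_ifs <;> positivity

theorem shuffleMul_nonneg (hq : 0 < q) (l : List ℕ) {φ : List ℕ → K} (hφ : 0 ≤ φ) :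
    0 ≤ shuffleMul q l φ := by
  intro w
  induction w generalizing l φ with
  | nil =>
    cases l with
    | nil => exact hφ []
    | cons j l => exact le_rfl
  | cons k w ih =>
    cases l with
    | nil => exact shuffleMul_nil q ▸ hφ (k :: w)
    | cons j l =>
      have hdel := congrFun (LinearMap.congr_fun (deletion_mul_shuffleMul q k j l) φ) w
      change shuffleMul q (j :: l) φ (k :: w) =
        wordWt q (j :: l) k * shuffleMul q (j :: l) (deletion K k φ) w + _ at hdel
      rw [hdel]
      refine add_nonneg (mul_nonneg (wordWt_pos hq _ _).le (ih _ fun v => hφ (k :: v))) ?_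
      split_ifs
      exacts [ih l hφ, le_rfl]

theorem shuffleMul_append_pos (hq : 0 < q) (l : List ℕ) {φ : List ℕ → K} (hφ : 0 ≤ φ) {z : List ℕ}
    (hz : 0 < φ z) : 0 < shuffleMul q l φ (l ++ z) := by
  induction l with
  | nil => exact shuffleMul_nil q ▸ hz
  | cons j l ih =>
    have hdel := congrFun (LinearMap.congr_fun (deletion_mul_shuffleMul q j j l) φ) (l ++ z)
    rw [if_pos rfl] at hdel
    change shuffleMul q (j :: l) φ (j :: l ++ z) =
      wordWt q (j :: l) j * shuffleMul q (j :: l) (deletion K j φ) (l ++ z) +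
        shuffleMul q l φ (l ++ z) at hdel
    rw [hdel]
    exact add_pos_of_nonneg_of_pos (mul_nonneg (wordWt_pos hq _ _).le
      (shuffleMul_nonneg hq (j :: l) (fun v => hφ (j :: v)) _)) ih

theorem shuffleProd_nonneg (hq : 0 < q) (P : List Segment) : 0 ≤ shuffleProd q P := by
  induction P with
  | nil => exact Pi.single_nonneg.2 zero_le_one
  | cons p P ih => exact shuffleMul_nonneg hq _ ih

theorem shuffleProd_concat_pos (hq : 0 < q) (P : List Segment) :
    0 < shuffleProd q P (concat P) := by
  induction P with
  | nil => exact one_pos.trans_eq (Pi.single_eq_same (M := fun _ : List ℕ => K) [] 1).symm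
  | cons p P ih => exact shuffleMul_append_pos hq _ (shuffleProd_nonneg hq P) ih

/-- Acting on the empty word makes the products triangular with respect to the length and then the
lexicographic order on the concatenations, and positivity keeps the diagonal from vanishing. -/
theorem linearIndependent_rootMonomial_shuffleGen (hq : 0 < q) (hq1 : q ≠ 1) :
    LinearIndependent K fun P : {P : List Segment // P.SortedGE} =>
      rootMonomial q (shuffleGen q) P.1 := by
  have hq2 := one_sub_sq_ne_zero hq hq1
  refine .of_comp ((letterSubmodule q).subtype ∘ₗ LinearMap.applyₗ (vacuum q)) ?_
  refine linearIndependent_of_triangular (fun P => LinearMap.proj (concat P.1))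
    (key := fun P => toLex ((concat P.1).length, concat P.1))
    (fun P Q h => Subtype.ext (injOn_concat P.2 Q.2 (Prod.ext_iff.1 (toLex.injective h)).2)) ?_ ?_
  · intro P
    obtain ⟨c, hc, h⟩ := exists_rootMonomial_vacuum_apply_eq hq2 P.1
    change (rootMonomial q (shuffleGen q) P.1 (vacuum q)).1 (concat P.1) ≠ 0
    rw [h _ le_rfl]
    exact (mul_ne_zero hc (shuffleProd_concat_pos hq P.1).ne')
  · intro P Q h
    change (rootMonomial q (shuffleGen q) Q.1 (vacuum q)).1 (concat P.1) = 0
    rcases Prod.Lex.toLex_lt_toLex.1 h with hlen | ⟨hlen, hlt⟩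
    · exact degreeLE_rootMonomial_vacuum q Q.1 _ hlen
    · obtain ⟨c, -, h⟩ := exists_rootMonomial_vacuum_apply_eq hq2 Q.1
      rw [h _ hlen.le]
      refine mul_eq_zero_of_right c ?_
      by_contra hne
      exact (le_concat_of_shuffleProd_ne_zero Q.2 hne).not_gt hlt

end Positivity

theorem exists_linearOrder_isStrictOrderedRing_one_lt_X :
    ∃ (_ : LinearOrder (RatFunc ℚ)) (_ : IsStrictOrderedRing (RatFunc ℚ)),
      1 < (RatFunc.X : RatFunc ℚ) := by
  obtain ⟨t, ht, h1t⟩ := ((Algebraic.countable ℚ ℝ).dense_compl ℝ).exists_gt 1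
  have hinj : Function.Injective (Polynomial.aeval (R := ℚ) t) := transcendental_iff_injective.1 ht
  let φ : RatFunc ℚ →+* ℝ := RatFunc.liftRingHom (Polynomial.aeval (R := ℚ) t : _ →+* ℝ)
    (nonZeroDivisors_le_comap_nonZeroDivisors_of_injective _ hinj)
  have hX : φ RatFunc.X = t := by
    simp [φ]
  let order := LinearOrder.lift' φ φ.injective
  refine ⟨order, Function.Injective.isStrictOrderedRing φ (map_zero φ) (map_one φ) (map_add φ)
    (map_mul φ) Iff.rfl Iff.rfl, ?_⟩
  change φ 1 < φ RatFunc.X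
  rwa [map_one, hX]

/-! ### Segments as words in the letters of `Fin n` -/

theorem strictMono_map {α β : Type*} [LinearOrder α] [LinearOrder β] {f : α → β}
    (hf : StrictMono f) : StrictMono (List.map f) := fun l l' h => by
  induction h with
  | nil => exact List.nil_lt_cons _ _
  | rel h => exact List.Lex.rel (hf h)
  | cons _ ih => exact List.Lex.cons ih

theorem bijOn_map {α β : Type*} {f : α → β} {s : Set α} {t : Set β} (h : Set.BijOn f s t) :
    Set.BijOn (List.map f) {l | ∀ x ∈ l, x ∈ s} {l | ∀ y ∈ l, y ∈ t} := by
  have hmap : List.map f ∘ List.map ((↑) : s → α) = List.map (s.domRestrict f) :=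
    List.map_comp_map _ _
  rw [← Set.range_list_map_coe, ← h.image_eq, ← Set.range_domRestrict, ← Set.range_list_map, ← hmap,
    Set.range_comp]
  refine Set.InjOn.bijOn_image ?_
  rintro _ ⟨l, rfl⟩ _ ⟨l', rfl⟩ hl
  refine congrArg _ (Function.Injective.list_map (Set.injOn_iff_injective.1 h.injOn) ?_)
  rwa [← hmap]

theorem word_strictMono : StrictMono word := fun p p' h => by
  simpa [concat] using concat_cons_lt (P := []) (P' := []) h (by simp)

section Encode

variable {n : ℕ} {l l' : List (Fin n)}

/-- The segment spelled by a word in the letters of `Fin n`. The value on a word that is not a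
segment is irrelevant. -/
def encode : List (Fin n) → Segment
  | [] => toLex (0, 0)
  | x :: t => toLex ((x : ℕ), t.length)

theorem map_val_eq_word_encode (h : IsSegment l) : l.map Fin.val = word (encode l) := by
  obtain ⟨hne, hchain⟩ := h
  induction l with
  | nil => exact absurd rfl hne
  | cons x t ih =>
    cases t with
    | nil => rfl
    | cons y t =>
      obtain ⟨hxy, hchain⟩ := List.isChain_cons_cons.1 hchain
      rw [List.map_cons, ih (List.cons_ne_nil y t) hchain]
      change (x : ℕ) :: List.range' y (t.length + 1) = List.range' x (t.length + 1 + 1)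
      rw [List.range'_succ (n := t.length + 1), hxy]

theorem isSegment_and_encode_eq_iff {p : Segment} :
    IsSegment l ∧ encode l = p ↔ l.map Fin.val = word p := by
  refine ⟨fun ⟨hl, hp⟩ => hp ▸ map_val_eq_word_encode hl, fun h => ?_⟩
  have hl : IsSegment l := by
    refine ⟨?_, ?_⟩
    · rintro rfl
      cases h
    · have hchain := List.isChain_range' p.start (p.extent + 1) 1
      rw [← word, ← h, List.isChain_map] at hchain
      exact hchain
  exact ⟨hl, word_strictMono.injective ((map_val_eq_word_encode hl).symm.trans h)⟩

theorem lexLt_iff_encode_lt (hl : IsSegment l) (hl' : IsSegment l') :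
    LexLt l l' ↔ encode l < encode l' := by
  rw [← word_strictMono.lt_iff_lt, ← map_val_eq_word_encode hl, ← map_val_eq_word_encode hl',
    (strictMono_map Fin.val_strictMono).lt_iff_lt]
  exact Iff.rfl

theorem bijOn_encode : Set.BijOn (encode (n := n)) {l | IsSegment l}
    {p | p.start + p.extent < n} := by
  refine ⟨fun l hl => ?_, fun l hl l' hl' h => ?_, fun p hp => ?_⟩
  · have hlast : (encode l).start + (encode l).extent ∈ l.map Fin.val := by
      rw [map_val_eq_word_encode hl, word, List.mem_range'_1]
      omega
    obtain ⟨x, -, hx⟩ := List.mem_map.1 hlast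
    exact hx.symm.trans_lt x.2
  · refine Fin.val_injective.list_map ?_
    rw [map_val_eq_word_encode hl, map_val_eq_word_encode hl', h]
  · have hlt : ∀ i ∈ word p, i < n := fun i hi => by
      rw [word, List.mem_range'_1] at hi
      rw [Set.mem_ofPred_eq] at hp
      omega
    refine ⟨(word p).pmap Fin.mk hlt, isSegment_and_encode_eq_iff.2 ?_⟩
    rw [List.map_pmap, List.pmap_eq_map, List.map_id']

theorem isChain_not_lexLt_iff {L : List (List (Fin n))} (hL : ∀ l ∈ L, IsSegment l) :
    L.IsChain (fun l l' => ¬ LexLt l l') ↔ (L.map encode).SortedGE := by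
  rw [List.sortedGE_iff_isChain, List.isChain_map]
  constructor <;> refine List.IsChain.imp_of_mem_imp fun l l' hl hl' h => ?_
  · exact not_lt.1 (mt (lexLt_iff_encode_lt (hL l hl) (hL l' hl')).2 h)
  · exact mt (lexLt_iff_encode_lt (hL l hl) (hL l' hl')).1 h.not_gt

theorem bijOn_map_encode : Set.BijOn (List.map (encode (n := n)))
    {L | (∀ l ∈ L, IsSegment l) ∧ L.IsChain fun l l' => ¬ LexLt l l'}
    {P | P.SortedGE ∧ ∀ p ∈ P, p.start + p.extent < n} := by
  have h := bijOn_map (bijOn_encode (n := n))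
  refine ⟨fun L ⟨hL, hchain⟩ => ⟨(isChain_not_lexLt_iff hL).1 hchain, h.mapsTo hL⟩,
    h.injOn.mono fun L hL => hL.1, fun P ⟨hP, hlt⟩ => ?_⟩
  obtain ⟨L, hL, rfl⟩ := h.surjOn hlt
  exact ⟨L, ⟨hL, (isChain_not_lexLt_iff hL).2 hP⟩, rfl⟩

end Encode

/-! ### The algebra `Ui n` -/

section Generators

variable {n : ℕ}

/-- The generators of `Ui n`, extended by zero to a family indexed by the natural numbers. -/
noncomputable def gen (n i : ℕ) : Ui n := if h : i < n then Bgen n ⟨i, h⟩ else 0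

theorem gen_of_lt {i : ℕ} (h : i < n) : gen n i = Bgen n ⟨i, h⟩ := dif_pos h

theorem gen_of_ge {i : ℕ} (h : n ≤ i) : gen n i = 0 := dif_neg h.not_gt

theorem gen_val (i : Fin n) : gen n i = Bgen n i := gen_of_lt i.2

theorem isFilteredSerre_gen : IsFilteredSerre (RatFunc.X : RatFunc ℚ) (gen n) where
  comm {i j} hij := by
    by_cases hj : j < n
    · have hi : i < n := by omega
      have hrel := RingQuot.mkAlgHom_rel (RatFunc ℚ) (UiRel.comm (⟨i, hi⟩ : Fin n) ⟨j, hj⟩ hij)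
      rw [gen_of_lt hi, gen_of_lt hj, Bgen, Bgen, ← map_mul, hrel, map_mul, sub_self]
      exact zero_mem _
    · rw [gen_of_ge (not_lt.1 hj), mul_zero, zero_mul, sub_zero]
      exact zero_mem _
  serre {i j} hij := by
    rcases le_or_gt n i with hi | hi
    · simp [gen_of_ge hi]
    rcases le_or_gt n j with hj | hj
    · simp [gen_of_ge hj]
    have hrel := RingQuot.mkAlgHom_rel (RatFunc ℚ) (UiRel.serre (⟨i, hi⟩ : Fin n) ⟨j, hj⟩ hij)
    simp only [map_add, map_mul, map_smul] at hrel
    rw [gen_of_lt hi, gen_of_lt hj, Bgen, Bgen, hrel, add_sub_cancel_left, ← Bgen, ← gen_of_lt hj]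
    exact wordFiltration_mono _ one_le_two (mem_wordFiltration_one _ j)

theorem adjoin_range_gen : Algebra.adjoin (RatFunc ℚ) (Set.range (gen n)) = ⊤ := by
  have hgen : Algebra.adjoin (RatFunc ℚ) (Set.range (Bgen n)) = ⊤ := by
    have hrange : Set.range (Bgen n) =
        RingQuot.mkAlgHom (RatFunc ℚ) (UiRel n) '' Set.range (FreeAlgebra.ι (RatFunc ℚ)) :=
      Set.range_comp _ _
    rw [hrange, ← AlgHom.map_adjoin, FreeAlgebra.adjoin_range_ι, Algebra.map_top,
      AlgHom.range_eq_top]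
    exact RingQuot.mkAlgHom_surjective _ _
  refine top_le_iff.1 (hgen.ge.trans (Algebra.adjoin_mono ?_))
  rintro _ ⟨i, rfl⟩
  exact ⟨i, gen_val i⟩

theorem BsegRev_cons (i : Fin n) {l : List (Fin n)} (hl : l ≠ []) :
    BsegRev (i :: l) = qBracket (RatFunc.X : RatFunc ℚ) (BsegRev l) (Bgen n i) := by
  obtain ⟨j, t, rfl⟩ := List.exists_cons_of_ne_nil hl
  rfl

theorem Bseg_eq_rootVector {l : List (Fin n)} {a k : ℕ}
    (h : l.map Fin.val = List.range' a (k + 1)) :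
    Bseg l = rootVector (RatFunc.X : RatFunc ℚ) (gen n) a k := by
  induction k generalizing l with
  | zero =>
    obtain ⟨i, rfl, rfl⟩ := List.map_eq_singleton_iff.1 h
    exact (gen_val i).symm
  | succ k ih =>
    rw [List.range'_1_concat] at h
    obtain ⟨l, t, rfl, hl, ht⟩ := List.map_eq_append_iff.1 h
    obtain ⟨i, rfl, hi⟩ := List.map_eq_singleton_iff.1 ht
    have hne : l.reverse ≠ [] := by
      rw [ne_eq, List.reverse_eq_nil_iff]
      rintro rfl
      cases hl
    rw [Bseg, List.reverse_append, List.reverse_singleton, List.singleton_append,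
      BsegRev_cons i hne, ← Bseg, ih hl, rootVector_succ, add_assoc, ← hi, gen_val]

theorem prod_map_Bseg {L : List (List (Fin n))} (hL : ∀ l ∈ L, IsSegment l) :
    (L.map Bseg).prod = rootMonomial (RatFunc.X : RatFunc ℚ) (gen n) (L.map encode) := by
  rw [rootMonomial, List.map_map]
  exact congrArg _ <| List.map_congr_left fun l hl =>
    Bseg_eq_rootVector (map_val_eq_word_encode (hL l hl))

end Generators

section Representation

variable {n : ℕ}

theorem one_sub_X_sq_ne_zero : 1 - (RatFunc.X : RatFunc ℚ) ^ 2 ≠ 0 := by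
  obtain ⟨_, _, hX⟩ := exists_linearOrder_isStrictOrderedRing_one_lt_X
  exact one_sub_sq_ne_zero (zero_lt_one.trans hX) hX.ne'

/-- The action of `Ui n` on the subalgebra of the `q`-shuffle algebra generated by the letters. -/
noncomputable def rep (n : ℕ) :
    Ui n →ₐ[RatFunc ℚ] Module.End (RatFunc ℚ) (letterSubmodule (RatFunc.X : RatFunc ℚ)) :=
  RingQuot.liftAlgHom (RatFunc ℚ)
    ⟨FreeAlgebra.lift (RatFunc ℚ) fun i : Fin n => shuffleGen RatFunc.X i, fun x y h => by
      have hs := isSerre_creation (q := (RatFunc.X : RatFunc ℚ)) RatFunc.X_ne_zero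
      have hd := isSerre_annihilation (q := (RatFunc.X : RatFunc ℚ)) RatFunc.X_ne_zero
      have hboson := isBoson_creation_annihilation (RatFunc.X : RatFunc ℚ)
      cases h with
      | comm i j hij =>
        simp only [map_mul, FreeAlgebra.lift_ι_apply]
        exact (hboson.commute_add hs hd _ hij).eq
      | serre i j hij =>
        simp only [map_mul, map_add, map_smul, FreeAlgebra.lift_ι_apply]
        exact hboson.serre_add hs hd RatFunc.X_ne_zero one_sub_X_sq_ne_zero (fun _ => rfl) hij⟩

theorem rep_gen {i : ℕ} (h : i < n) : rep n (gen n i) = shuffleGen RatFunc.X i := by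
  rw [gen_of_lt h, rep, Bgen, RingQuot.liftAlgHom_mkAlgHom_apply, FreeAlgebra.lift_ι_apply]

theorem rep_rootMonomial {P : List Segment} (hP : ∀ p ∈ P, p.start + p.extent < n) :
    rep n (rootMonomial (RatFunc.X : RatFunc ℚ) (gen n) P) =
      rootMonomial (RatFunc.X : RatFunc ℚ) (shuffleGen RatFunc.X) P := by
  let V := letterSubmodule (RatFunc.X : RatFunc ℚ)
  refine (map_rootMonomial (A := Ui n) (B := Module.End (RatFunc ℚ) V) (rep n) (gen n) P).trans ?_
  exact rootMonomial_congr fun p hp i hi => rep_gen (hi.trans_lt (hP p hp))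

theorem linearIndependent_rootMonomial_gen : LinearIndependent (RatFunc ℚ)
    fun P : {P : List Segment | P.SortedGE ∧ ∀ p ∈ P, p.start + p.extent < n} =>
      rootMonomial (RatFunc.X : RatFunc ℚ) (gen n) P := by
  obtain ⟨_, _, hX⟩ := exists_linearOrder_isStrictOrderedRing_one_lt_X
  refine .of_comp (rep n).toLinearMap ?_
  have hrep := funext fun P : {P : List Segment | P.SortedGE ∧ ∀ p ∈ P, p.start + p.extent < n} =>
    rep_rootMonomial P.2.2
  have hindep := linearIndependent_rootMonomial_shuffleGen (zero_lt_one.trans hX) hX.ne'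
  change LinearIndependent (RatFunc ℚ) fun P => rep n _
  rw [hrep]
  exact hindep.comp (Set.inclusion fun _ hP => hP.1) (Set.inclusion_injective _)

theorem span_rootMonomial_gen : Submodule.span (RatFunc ℚ)
    (rootMonomial (RatFunc.X : RatFunc ℚ) (gen n) ''
      {P | P.SortedGE ∧ ∀ p ∈ P, p.start + p.extent < n}) = ⊤ := by
  obtain ⟨_, _, hX⟩ := exists_linearOrder_isStrictOrderedRing_one_lt_X
  have hX0 := zero_lt_one.trans hX
  refine top_le_iff.1 ((isFilteredSerre_gen.span_rootMonomial_sorted_eq_top hX0.ne'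
    (add_pos hX0 (inv_pos.2 hX0)).ne' (fun i => gen_of_ge) adjoin_range_gen).ge.trans
    (Submodule.span_le.2 ?_))
  rintro _ ⟨P, hP, rfl⟩
  by_cases hlt : ∀ p ∈ P, p.start + p.extent < n
  · exact Submodule.subset_span ⟨P, ⟨hP, hlt⟩, rfl⟩
  · push Not at hlt
    obtain ⟨p, hp, hnp⟩ := hlt
    exact rootMonomial_eq_zero (q := (RatFunc.X : RatFunc ℚ)) hp (gen_of_ge hnp) ▸ zero_mem _

end Representation

end UiPBW

/-- The products `B_{[a₁,b₁]} ⋯ B_{[a_m,b_m]}` over lexicographically nonincreasing lists of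
segments form a `ℚ(q)`-basis of `U^ı(sl_{n+1})` (the Lyndon basis = PBW-type basis). -/
theorem lyndon_basis_of_Ui {n : ℕ} :
    LinearIndependent (RatFunc ℚ)
      (fun L : {L : List (List (Fin n)) //
          (∀ l ∈ L, IsSegment l) ∧ L.Chain' (fun a b => ¬ LexLt a b)} =>
        ((L.val.map Bseg).prod : Ui n)) ∧
    Submodule.span (RatFunc ℚ)
      (Set.range (fun L : {L : List (List (Fin n)) //
          (∀ l ∈ L, IsSegment l) ∧ L.Chain' (fun a b => ¬ LexLt a b)} =>
        ((L.val.map Bseg).prod : Ui n))) = ⊤ := by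
  let e := (UiPBW.bijOn_map_encode (n := n)).equiv
  let v (P : {P : List UiPBW.Segment | P.SortedGE ∧ ∀ p ∈ P, p.start + p.extent < n}) : Ui n :=
    UiPBW.rootMonomial (RatFunc.X : RatFunc ℚ) (UiPBW.gen n) P
  have hprod : v ∘ e = fun L => (L.1.map Bseg).prod :=
    funext fun L => (UiPBW.prod_map_Bseg L.2.1).symm
  have hindep : LinearIndependent (RatFunc ℚ) (v ∘ e) :=
    UiPBW.linearIndependent_rootMonomial_gen.comp e e.injective
  have hspan : Submodule.span (RatFunc ℚ) (Set.range (v ∘ e)) = ⊤ := by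
    rw [e.surjective.range_comp, ← Set.image_eq_range, UiPBW.span_rootMonomial_gen]
  rw [hprod] at hindep hspan
  exact ⟨hindep, hspan⟩
end

section
/- For 1 ≤ i < j ≤ n+1 write v[i,j] = v_i v_{i+1} ⋯ v_{j−1}. Let (l_1, l_2) be a pair of the form (v[i,j], v[r,s]) with i < r, or of the form (v[r,j], v[r,s]) with j < s. Then the word l_1 l_2 is integral for U = U^ı(sl_{n+1}): B_{l_1} B_{l_2} lies in the ℤ[q, q^{-1}]-span of {B_g : g a good word with g ≼ l_1 l_2}. -/
/-- The subring `ℤ[q, q⁻¹]` of `ℚ(q)`. -/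
noncomputable def LaurentInt : Subring (RatFunc ℚ) :=
  Subring.closure {RatFunc.X, (RatFunc.X)⁻¹}

/-- A word `w` is integral if `B_w` is a `ℤ[q,q⁻¹]`-linear combination of the `B_g` with `g` a
good word satisfying `g ≼ w`. -/
def IsIntegralWord {n : ℕ} {R : Type*} [Ring R] [Algebra (RatFunc ℚ) R]
    (b : Fin n → R) (w : List (Fin n)) : Prop :=
  ∃ (s : Finset (List (Fin n))) (c : List (Fin n) → RatFunc ℚ),
    (∀ g ∈ s, IsGood (RatFunc ℚ) b g ∧ PrecLe g w) ∧ (∀ g ∈ s, c g ∈ LaurentInt) ∧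
    Bword b w = ∑ g ∈ s, c g • Bword b g

namespace SplitIQuantum

theorem exists_ratFunc_ringHom_real : ∃ φ : RatFunc ℚ →+* ℝ, 0 < φ RatFunc.X := by
  have hl : Transcendental ℚ (liouvilleNumber 2) := by
    have := transcendental_liouvilleNumber (m := 2) le_rfl
    exact_mod_cast fun h => this ((IsFractionRing.isAlgebraic_iff ℤ ℚ ℝ).2 h)
  have hpos : 0 < liouvilleNumber 2 :=
    (LiouvilleNumber.summable one_lt_two).tsum_pos (fun i => by positivity) 0 (by positivity)
  have hinj := transcendental_iff_injective.1 hl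
  refine ⟨IsFractionRing.lift (A := Polynomial ℚ)
    (g := (Polynomial.aeval (liouvilleNumber 2)).toRingHom) hinj, ?_⟩
  rw [← RatFunc.algebraMap_X, IsFractionRing.lift_algebraMap]
  simpa using hpos

theorem exists_linearOrder_ratFunc : ∃ _ : LinearOrder (RatFunc ℚ),
    IsStrictOrderedRing (RatFunc ℚ) ∧ 0 < (RatFunc.X : RatFunc ℚ) := by
  obtain ⟨φ, hφ⟩ := exists_ratFunc_ringHom_real
  let order := LinearOrder.lift' φ φ.injective
  refine ⟨order, Function.Injective.isStrictOrderedRing φ (map_zero φ) (map_one φ) (map_add φ)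
    (map_mul φ) Iff.rfl Iff.rfl, ?_⟩
  change φ 0 < φ RatFunc.X
  rwa [map_zero]

theorem X_add_inv_X_ne_zero : (RatFunc.X : RatFunc ℚ) + RatFunc.X⁻¹ ≠ 0 := by
  obtain ⟨_, _, hX⟩ := exists_linearOrder_ratFunc
  positivity

/-! ### Tensor powers of the vector representation -/

section TensorPowers

/-- Functions on configurations of tokens. A token `(m, t)` stands for the basis vector `e_m` of the
vector representation, together with a target `t` that no operator changes; configurations of
length `k` index a basis of the `k`-th tensor power. -/
abbrev ConfSpace (K : Type*) := List (ℕ × ℕ) → K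

variable {K : Type*} [Field K] (q : K) (a b : ℕ) (t : ℕ) (f : ConfSpace K)

/-- The restriction of a function to the configurations whose first token is `x`. -/
def freeze (x : ℕ × ℕ) : ConfSpace K →ₗ[K] ConfSpace K :=
  LinearMap.funLeft K K (List.cons x)

theorem freeze_apply (x : ℕ × ℕ) (f : ConfSpace K) (S : List (ℕ × ℕ)) :
    freeze x f S = f (x :: S) := rfl

/-- The eigenvalue of the Cartan element `K_a` on `e_m`. -/
def cartanWeight (a m : ℕ) : K := if m = a then q else if m = a + 1 then q⁻¹ else 1

/-- The coefficient at a configuration of the action of `B_a`, which exchanges `e_a` and `e_{a+1}`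
and acts on tensor powers through the coideal coproduct `B_a ↦ K_a ⊗ B_a + B_a ⊗ 1`. It is zero at
the empty configuration, where the representation is trivial. -/
def exchangeCoeff (a : ℕ) : List (ℕ × ℕ) → ConfSpace K →ₗ[K] K
  | [] => 0
  | x :: S =>
    cartanWeight q a x.1 • exchangeCoeff a S ∘ₗ freeze x
      + (if x.1 = a then LinearMap.proj ((a + 1, x.2) :: S) else 0)
      + (if x.1 = a + 1 then LinearMap.proj ((a, x.2) :: S) else 0)

/-- The action of `B_a` on all tensor powers of the vector representation at once. -/
def exchange (a : ℕ) : Module.End K (ConfSpace K) := LinearMap.pi (exchangeCoeff q a)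

theorem exchange_apply_nil (f : ConfSpace K) : exchange q a f [] = 0 := rfl

theorem exchange_apply_cons (f : ConfSpace K) (x : ℕ × ℕ) (S : List (ℕ × ℕ)) :
    exchange q a f (x :: S) = cartanWeight q a x.1 * exchange q a (freeze x f) S
      + (if x.1 = a then f ((a + 1, x.2) :: S) else 0)
      + (if x.1 = a + 1 then f ((a, x.2) :: S) else 0) := by
  simp only [exchange, LinearMap.pi_apply, exchangeCoeff, LinearMap.add_apply, LinearMap.smul_apply,
    LinearMap.comp_apply, smul_eq_mul]
  split_ifs <;> rfl

theorem freeze_exchange_self :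
    freeze (a, t) (exchange q a f) = q • exchange q a (freeze (a, t) f) + freeze (a + 1, t) f := by
  ext S
  simp [freeze_apply, exchange_apply_cons, cartanWeight]

theorem freeze_exchange_succ :
    freeze (a + 1, t) (exchange q a f) =
      q⁻¹ • exchange q a (freeze (a + 1, t) f) + freeze (a, t) f := by
  ext S
  simp [freeze_apply, exchange_apply_cons, cartanWeight]

variable {a b} in
theorem freeze_exchange_of_ne {m : ℕ} (h : m ≠ a) (h' : m ≠ a + 1) :
    freeze (m, t) (exchange q a f) = exchange q a (freeze (m, t) f) := by
  ext S
  simp [freeze_apply, exchange_apply_cons, cartanWeight, h, h']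

variable {a b}

theorem exchange_comm (h : a + 1 < b) :
    exchange q a (exchange q b f) = exchange q b (exchange q a f) := by
  ext S
  induction S generalizing f with
  | nil => rfl
  | cons x S ih =>
    obtain ⟨m, t⟩ := x
    have key := ih (freeze (m, t) f)
    simp only [← freeze_apply]
    obtain rfl | rfl | rfl | rfl | ⟨ha, ha', hb, hb'⟩ :
      m = a ∨ m = a + 1 ∨ m = b ∨ m = b + 1 ∨ m ≠ a ∧ m ≠ a + 1 ∧ m ≠ b ∧ m ≠ b + 1 := by omega
    all_goals simp (disch := omega) only [freeze_exchange_self, freeze_exchange_succ,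
      freeze_exchange_of_ne, map_add, map_smul, Pi.add_apply, Pi.smul_apply, key]

variable {q} (hq : q ≠ 0)
include hq

theorem exchange_serre_succ (a : ℕ) (f : ConfSpace K) :
    exchange q a (exchange q a (exchange q (a + 1) f)) +
        exchange q (a + 1) (exchange q a (exchange q a f)) =
      (q + q⁻¹) • exchange q a (exchange q (a + 1) (exchange q a f)) + exchange q (a + 1) f := by
  ext S
  induction S generalizing f with
  | nil => simp [exchange_apply_nil]
  | cons x S ih =>
    obtain ⟨m, t⟩ := x
    have key := ih (freeze (m, t) f)
    simp only [Pi.add_apply, Pi.smul_apply, smul_eq_mul, ← freeze_apply] at key ⊢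
    obtain rfl | rfl | rfl | ⟨h₀, h₁, h₂⟩ : m = a ∨ m = a + 1 ∨ m = a + 1 + 1 ∨
      m ≠ a ∧ m ≠ a + 1 ∧ m ≠ a + 1 + 1 := by omega
    all_goals simp (disch := omega) only [freeze_exchange_self, freeze_exchange_succ,
      freeze_exchange_of_ne, map_add, map_smul, Pi.add_apply, Pi.smul_apply, smul_eq_mul]
    · field_simp at key ⊢
      linear_combination q ^ 2 * key
    · field_simp at key ⊢
      linear_combination key
    · field_simp at key ⊢
      linear_combination key
    · exact key

theorem exchange_serre_pred (a : ℕ) (f : ConfSpace K) :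
    exchange q (a + 1) (exchange q (a + 1) (exchange q a f)) +
        exchange q a (exchange q (a + 1) (exchange q (a + 1) f)) =
      (q + q⁻¹) • exchange q (a + 1) (exchange q a (exchange q (a + 1) f)) + exchange q a f := by
  ext S
  induction S generalizing f with
  | nil => simp [exchange_apply_nil]
  | cons x S ih =>
    obtain ⟨m, t⟩ := x
    have key := ih (freeze (m, t) f)
    simp only [Pi.add_apply, Pi.smul_apply, smul_eq_mul, ← freeze_apply] at key ⊢
    obtain rfl | rfl | rfl | ⟨h₀, h₁, h₂⟩ : m = a ∨ m = a + 1 ∨ m = a + 1 + 1 ∨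
      m ≠ a ∧ m ≠ a + 1 ∧ m ≠ a + 1 + 1 := by omega
    all_goals simp (disch := omega) only [freeze_exchange_self, freeze_exchange_succ,
      freeze_exchange_of_ne, map_add, map_smul, Pi.add_apply, Pi.smul_apply, smul_eq_mul]
    · field_simp at key ⊢
      linear_combination q * key
    · field_simp at key ⊢
      linear_combination q ^ 2 * key
    · field_simp at key ⊢
      linear_combination key
    · exact key

end TensorPowers

/-- The word `v[i₁,j₁) v[i₂,j₂) ⋯` of a list of pairs `(i, j)`, with letters numbered from `0`. For
a configuration of tokens it is empty when every token has reached or passed its target. -/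
def concat (T : List (ℕ × ℕ)) : List ℕ := T.flatMap fun x => List.Ico x.1 x.2

theorem concat_cons (x : ℕ × ℕ) (T : List (ℕ × ℕ)) :
    concat (x :: T) = List.Ico x.1 x.2 ++ concat T := rfl

theorem concat_append (T T' : List (ℕ × ℕ)) : concat (T ++ T') = concat T ++ concat T' :=
  List.flatMap_append

/-- `S'` arises from `S` by moving one token across the edge between `a` and `a + 1`. -/
inductive Hop (a : ℕ) : List (ℕ × ℕ) → List (ℕ × ℕ) → Prop
  | forward (t : ℕ) (S : List (ℕ × ℕ)) : Hop a ((a, t) :: S) ((a + 1, t) :: S)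
  | backward (t : ℕ) (S : List (ℕ × ℕ)) : Hop a ((a + 1, t) :: S) ((a, t) :: S)
  | cons (x : ℕ × ℕ) {S S' : List (ℕ × ℕ)} (h : Hop a S S') : Hop a (x :: S) (x :: S')

/-- One token hop for each letter of `w`, from left to right, can bring every token of `S` to its
target or beyond. -/
inductive Completes : List ℕ → List (ℕ × ℕ) → Prop
  | nil {S : List (ℕ × ℕ)} (h : concat S = []) : Completes [] S
  | cons {a : ℕ} {w : List ℕ} {S S' : List (ℕ × ℕ)} (h : Hop a S S') (hw : Completes w S') :
      Completes (a :: w) S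

/-- The indicator function of the configurations whose tokens have all reached or passed their
targets. -/
noncomputable def arrived (K : Type*) [Field K] : ConfSpace K :=
  fun S => if concat S = [] then 1 else 0

section MatrixCoefficients

variable {K : Type*} [Field K] {q : K} {a : ℕ}

theorem exists_hop_of_exchange_ne_zero {f : ConfSpace K} {S : List (ℕ × ℕ)}
    (h : exchange q a f S ≠ 0) : ∃ S', Hop a S S' ∧ f S' ≠ 0 := by
  induction S generalizing f with
  | nil => exact absurd rfl h
  | cons x S ih =>
    obtain ⟨m, t⟩ := x
    contrapose! h
    have hS : exchange q a (freeze (m, t) f) S = 0 :=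
      not_not.1 fun hne => (ih hne).elim fun S' hS' => hS'.2 (h _ (hS'.1.cons _))
    rw [exchange_apply_cons, hS]
    split_ifs with h₁ h₂ h₂
    · omega
    · subst h₁; simp [h _ (.forward t S)]
    · subst h₂; simp [h _ (.backward t S)]
    · simp

theorem completes_of_prod_exchange_ne_zero {w : List ℕ} {S : List (ℕ × ℕ)}
    (h : (w.map (exchange q)).prod (arrived K) S ≠ 0) : Completes w S := by
  induction w generalizing S with
  | nil => exact .nil (by simpa [arrived] using h)
  | cons a w ih =>
    rw [List.map_cons, List.prod_cons] at h
    obtain ⟨S', hS, hS'⟩ := exists_hop_of_exchange_ne_zero h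
    exact .cons hS (ih hS')

variable [LinearOrder K] [IsStrictOrderedRing K]

theorem cartanWeight_mul_exchange_freeze_le {f : ConfSpace K} (hf : 0 ≤ f) (x : ℕ × ℕ)
    (S : List (ℕ × ℕ)) :
    cartanWeight q a x.1 * exchange q a (freeze x f) S ≤ exchange q a f (x :: S) := by
  rw [exchange_apply_cons, add_assoc]
  exact le_add_of_nonneg_right
    (add_nonneg (ite_nonneg (hf _) le_rfl) (ite_nonneg (hf _) le_rfl))

variable (hq : 0 < q)
include hq

theorem cartanWeight_pos (a m : ℕ) : 0 < cartanWeight q a m := by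
  unfold cartanWeight
  split_ifs <;> positivity

theorem exchange_nonneg {f : ConfSpace K} (hf : 0 ≤ f) : 0 ≤ exchange q a f := by
  intro S
  induction S generalizing f with
  | nil => exact le_rfl
  | cons x S ih =>
    exact (mul_nonneg (cartanWeight_pos hq a x.1).le (ih fun S => hf (x :: S))).trans
      (cartanWeight_mul_exchange_freeze_le hf x S)

theorem exchange_pos {f : ConfSpace K} (hf : 0 ≤ f) {S S' : List (ℕ × ℕ)} (h : Hop a S S')
    (hS' : 0 < f S') : 0 < exchange q a f S := by
  induction h generalizing f with
  | forward t S =>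
    have h₀ := mul_nonneg (cartanWeight_pos hq a a).le
      (exchange_nonneg (a := a) hq (f := freeze (a, t) f) (fun S => hf (_ :: S)) S)
    simpa [exchange_apply_cons] using add_pos_of_nonneg_of_pos h₀ hS'
  | backward t S =>
    have h₀ := mul_nonneg (cartanWeight_pos hq a (a + 1)).le
      (exchange_nonneg (a := a) hq (f := freeze (a + 1, t) f) (fun S => hf (_ :: S)) S)
    simpa [exchange_apply_cons] using add_pos_of_nonneg_of_pos h₀ hS'
  | @cons x S S' _ ih =>
    exact (mul_pos (cartanWeight_pos hq a x.1) (ih (fun S => hf (x :: S)) hS')).trans_le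
      (cartanWeight_mul_exchange_freeze_le hf x S)

theorem prod_exchange_nonneg (w : List ℕ) : 0 ≤ (w.map (exchange q)).prod (arrived K) := by
  induction w with
  | nil => exact fun S => ite_nonneg zero_le_one le_rfl
  | cons a w ih =>
    rw [List.map_cons, List.prod_cons]
    exact exchange_nonneg hq ih

theorem Completes.prod_exchange_pos {w : List ℕ} {S : List (ℕ × ℕ)} (h : Completes w S) :
    0 < (w.map (exchange q)).prod (arrived K) S := by
  induction h with
  | nil h => simp [arrived, h]
  | @cons a w S S' h _ ih =>
    rw [List.map_cons, List.prod_cons]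
    exact exchange_pos hq (prod_exchange_nonneg hq w) h ih

end MatrixCoefficients

theorem Completes.cons_frozen {w : List ℕ} {S : List (ℕ × ℕ)} {x : ℕ × ℕ}
    (hx : List.Ico x.1 x.2 = []) (h : Completes w S) : Completes w (x :: S) := by
  induction h with
  | nil h => exact .nil (by rw [concat_cons, hx, h, List.nil_append])
  | cons h _ ih => exact .cons (h.cons x) ih

theorem Completes.cons_segment {w : List ℕ} {S : List (ℕ × ℕ)} {i j : ℕ} (h : Completes w S) :
    Completes (List.Ico i j ++ w) ((i, j) :: S) := by
  rcases le_total j i with hij | hij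
  · rw [List.Ico.eq_nil_of_le hij]
    exact h.cons_frozen (List.Ico.eq_nil_of_le hij)
  induction hij using Nat.decreasingInduction with
  | of_succ i hij ih =>
    rw [List.Ico.eq_cons hij]
    exact .cons (.forward j S) ih
  | self =>
    rw [List.Ico.self_empty]
    exact h.cons_frozen List.Ico.self_empty

theorem completes_concat (T : List (ℕ × ℕ)) : Completes (concat T) T := by
  induction T with
  | nil => exact .nil rfl
  | cons x T ih => exact ih.cons_segment

theorem Hop.forward_or_length_le {a : ℕ} {S S' : List (ℕ × ℕ)} (h : Hop a S S') :
    (∃ S₁ S₂ t, a < t ∧ S = S₁ ++ (a, t) :: S₂ ∧ S' = S₁ ++ (a + 1, t) :: S₂) ∨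
      (concat S).length ≤ (concat S').length := by
  induction h with
  | forward t S =>
    rcases lt_or_ge a t with h | h
    · exact .inl ⟨[], S, t, h, rfl, rfl⟩
    · right; simp [concat_cons]; omega
  | backward t S => right; simp [concat_cons]; omega
  | cons x _ ih =>
    obtain ⟨S₁, S₂, t, h, rfl, rfl⟩ | h := ih
    · exact .inl ⟨x :: S₁, S₂, t, h, rfl, rfl⟩
    · right; simpa [concat_cons] using h

theorem length_concat_forward {a t : ℕ} (h : a < t) (S₁ S₂ : List (ℕ × ℕ)) :
    (concat (S₁ ++ (a, t) :: S₂)).length = (concat (S₁ ++ (a + 1, t) :: S₂)).length + 1 := by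
  simp only [concat_append, concat_cons, List.length_append, List.Ico.length]
  omega

theorem Completes.length_concat_le {w : List ℕ} {S : List (ℕ × ℕ)} (h : Completes w S) :
    (concat S).length ≤ w.length := by
  induction h with
  | nil h => simp [h]
  | cons h _ ih =>
    obtain ⟨S₁, S₂, t, hat, rfl, rfl⟩ | h := h.forward_or_length_le
    · simpa [length_concat_forward hat] using ih
    · exact (h.trans ih).trans (Nat.le_succ _)

theorem cons_le_cons_of_lt {α : Type*} [LinearOrder α] {a b : α} (h : a < b) (x y : List α) :
    a :: x ≤ b :: y :=
  le_of_lt (List.Lex.rel h)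

-- The new segment `v[a,t)` takes the place of `v[a+1,t)` if it is preceded by a larger letter, and
-- moves to the front otherwise.
theorem exists_perm_cons_le_concat {a t : ℕ} (hat : a < t) {w : List ℕ} {T S₁ S₂ : List (ℕ × ℕ)}
    (hT : T.Perm (S₁ ++ (a + 1, t) :: S₂)) (hw : w ≤ concat T) :
    ∃ T', T'.Perm (S₁ ++ (a, t) :: S₂) ∧ a :: w ≤ concat T' := by
  obtain ⟨T₁, T₂, rfl⟩ := List.append_of_mem (hT.symm.subset (List.mem_append_cons_self))
  have hT₁₂ : (T₁ ++ T₂).Perm (S₁ ++ S₂) :=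
    ((List.perm_middle.symm.trans hT).trans List.perm_middle).cons_inv
  have hkeep : (T₁ ++ (a, t) :: T₂).Perm (S₁ ++ (a, t) :: S₂) :=
    (List.perm_middle.trans (hT₁₂.cons _)).trans List.perm_middle.symm
  have hmove : ((a, t) :: (T₁ ++ T₂)).Perm (S₁ ++ (a, t) :: S₂) :=
    (hT₁₂.cons _).trans List.perm_middle.symm
  rcases hc : concat T₁ with _ | ⟨c, u⟩
  · refine ⟨_, hkeep, ?_⟩
    simpa [concat_append, concat_cons, hc, List.Ico.eq_cons hat] using List.cons_le_cons a hw
  rcases lt_or_ge a c with hac | hca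
  · refine ⟨_, hkeep, ?_⟩
    rw [concat_append, hc]
    exact cons_le_cons_of_lt hac _ _
  · refine ⟨_, hmove, ?_⟩
    rw [concat_cons, List.Ico.eq_cons hat]
    refine List.cons_le_cons a (hw.trans ?_)
    rcases (Nat.succ_le_of_lt hat).eq_or_lt with h | h
    · simp [concat_append, concat_cons, ← h]
    · rw [concat_append, hc, List.Ico.eq_cons h]
      exact cons_le_cons_of_lt (Nat.lt_succ_of_le hca) _ _

theorem Completes.exists_perm_le_concat {w : List ℕ} {S : List (ℕ × ℕ)} (h : Completes w S)
    (hw : w.length ≤ (concat S).length) : ∃ T, T.Perm S ∧ w ≤ concat T := by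
  induction h with
  | nil h => exact ⟨_, .refl _, h.ge⟩
  | @cons a w S S' h h' ih =>
    rw [List.length_cons] at hw
    obtain ⟨S₁, S₂, t, hat, rfl, rfl⟩ | h := h.forward_or_length_le
    · obtain ⟨T, hT, hwT⟩ := ih (by
        rwa [length_concat_forward hat, Nat.add_le_add_iff_right] at hw)
      exact exists_perm_cons_le_concat hat hT hwT
    · have := h'.length_concat_le
      omega

-- `List.append_left_le` concerns the core instance `List.instLE` instead of Mathlib's `List.LE'`.
theorem append_le_append_left {α : Type*} [LinearOrder α] (u : List α) {x y : List α} (h : x ≤ y) :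
    u ++ x ≤ u ++ y := by
  induction u with
  | nil => exact h
  | cons a u ih => exact List.cons_le_cons a ih

theorem segment_append_comm_le {i j r s : ℕ} (hle : toLex (i, j) ≤ toLex (r, s)) (hrs : r < s)
    (u : List ℕ) :
    List.Ico i j ++ (List.Ico r s ++ u) ≤ List.Ico r s ++ (List.Ico i j ++ u) := by
  rcases le_or_gt j i with hij | hij
  · simp [List.Ico.eq_nil_of_le hij]
  rcases Prod.Lex.toLex_le_toLex.1 hle with h | ⟨rfl, h⟩
  · rw [List.Ico.eq_cons hij, List.Ico.eq_cons hrs]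
    exact cons_le_cons_of_lt h _ _
  · dsimp only at hrs h ⊢
    rw [← List.Ico.append_consecutive hij.le h]
    simp only [List.append_assoc]
    refine append_le_append_left _ ?_
    rcases h.eq_or_lt with rfl | hjs
    · simp
    · rw [List.Ico.eq_cons hij, List.Ico.eq_cons hjs]
      exact cons_le_cons_of_lt hij _ _

theorem concat_append_segment_le {r s : ℕ} (hrs : r < s) {T : List (ℕ × ℕ)}
    (hT : ∀ y ∈ T, toLex y ≤ toLex (r, s)) (u : List ℕ) :
    concat T ++ (List.Ico r s ++ u) ≤ List.Ico r s ++ (concat T ++ u) := by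
  induction T with
  | nil => exact le_rfl
  | cons y T ih =>
    rw [List.forall_mem_cons] at hT
    simp only [concat_cons, List.append_assoc]
    exact (append_le_append_left _ (ih hT.2)).trans (segment_append_comm_le hT.1 hrs _)

/-- The nonempty segments `v[i,j)` of `T` are weakly decreasing for the order on pairs `(i, j)`. -/
def IsDescending (T : List (ℕ × ℕ)) : Prop :=
  (∀ x ∈ T, x.1 < x.2) ∧ T.Pairwise fun x y => toLex y ≤ toLex x

theorem IsDescending.concat_le_of_perm {T T' : List (ℕ × ℕ)} (hT : IsDescending T)
    (h : T'.Perm T) : concat T' ≤ concat T := by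
  induction T generalizing T' with
  | nil => rw [h.eq_nil]
  | cons x T ih =>
    obtain ⟨hpos, hpw⟩ := hT
    rw [List.forall_mem_cons] at hpos
    rw [List.pairwise_cons] at hpw
    obtain ⟨T₁, T₂, rfl⟩ := List.append_of_mem (h.symm.subset List.mem_cons_self)
    have h' : (T₁ ++ T₂).Perm T := (List.perm_middle.symm.trans h).cons_inv
    calc concat (T₁ ++ x :: T₂)
        ≤ List.Ico x.1 x.2 ++ concat (T₁ ++ T₂) := by
          simp only [concat_append, concat_cons]
          exact concat_append_segment_le hpos.1
            (fun y hy => hpw.1 y (h'.subset (List.mem_append_left _ hy))) _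
      _ ≤ concat (x :: T) := append_le_append_left _ (ih ⟨hpos.2, hpw.2⟩ h')

theorem IsDescending.le_concat_of_completes {T : List (ℕ × ℕ)} (hT : IsDescending T) {w : List ℕ}
    (h : Completes w T) (hw : w.length ≤ (concat T).length) : w ≤ concat T := by
  obtain ⟨T', hT', hle⟩ := h.exists_perm_le_concat hw
  exact hle.trans (hT.concat_le_of_perm hT')

/-! ### Rewriting words by the Serre relations -/

section Serre

variable {A R : Type*} [CommRing A] [Ring R] [Algebra A R] {t : A} {B Y Z : R}

/-- The Serre relation of `B_i` and `B_j` for `|i - j| = 1`, with `t` in place of `q + q⁻¹`. -/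
def IsSerre (t : A) (B Y : R) : Prop := B * B * Y + Y * B * B = t • (B * Y * B) + Y

theorem IsSerre.mul_right (h : IsSerre t B Y) (hZ : Commute B Z) : IsSerre t B (Y * Z) := by
  have hBBZ : B * B * Z = Z * (B * B) := (hZ.mul_left hZ).eq
  calc B * B * (Y * Z) + Y * Z * B * B
      = (B * B * Y + Y * B * B) * Z := by simp only [add_mul, mul_assoc, hBBZ]
    _ = t • (B * (Y * Z) * B) + Y * Z := by
      rw [h, add_mul, smul_mul_assoc]
      simp only [mul_assoc, hZ.eq]

theorem IsSerre.mul_left (h : IsSerre t B Y) (hZ : Commute B Z) : IsSerre t B (Z * Y) := by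
  have hBBZ : B * B * Z = Z * (B * B) := (hZ.mul_left hZ).eq
  calc B * B * (Z * Y) + Z * Y * B * B
      = Z * (B * B * Y + Y * B * B) := by simp only [mul_add, ← mul_assoc, hBBZ]
    _ = t • (B * (Z * Y) * B) + Z * Y := by
      rw [h, mul_add, mul_smul_comm]
      simp only [← mul_assoc, hZ.eq]

-- Equivalently, `B` commutes with `Y * B * Z - Z * B * Y`.
theorem serre_commutator (ht : IsSMulRegular R t) (hYZ : Commute Y Z) (hY : IsSerre t B Y)
    (hZ : IsSerre t B Z) :
    Y * B * Z * B = B * Y * B * Z + Z * B * Y * B - B * Z * B * Y := by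
  have hY' : t • (B * Y * B) = B * B * Y + Y * B * B - Y := eq_sub_of_add_eq hY.symm
  have hZ' : t • (B * Z * B) = B * B * Z + Z * B * B - Z := eq_sub_of_add_eq hZ.symm
  apply ht
  dsimp only
  calc t • (Y * B * Z * B)
      = Y * (t • (B * Z * B)) := by simp only [mul_smul_comm, mul_assoc]
    _ = t • (B * Y * B) * Z + Z * (t • (B * Y * B)) - t • (B * Z * B) * Y := by
      rw [hY', hZ']
      simp only [mul_add, mul_sub, add_mul, sub_mul, mul_assoc, hYZ.eq, hYZ.left_comm]
      abel
    _ = t • (B * Y * B * Z + Z * B * Y * B - B * Z * B * Y) := by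
      simp only [smul_sub, smul_add, mul_smul_comm, smul_mul_assoc, mul_assoc]

theorem mul_prolonged_sub_eq (hYZ : Commute Y Z)
    (h : Y * B * Z * B = B * Y * B * Z + Z * B * Y * B - B * Z * B * Y) :
    Y * B * (Y * B) * Z - t • (Y * B * Z * (Y * B)) =
      (Y * Y * B - t • (Y * B * Y)) * (Z * B) + Y * B * Z * B * Y - Z * (Y * B * Y * B) := by
  have hBYBZ : B * Y * B * Z = Y * B * Z * B - Z * B * Y * B + B * Z * B * Y := by
    rw [h]
    abel
  calc Y * B * (Y * B) * Z - t • (Y * B * Z * (Y * B))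
      = Y * (B * Y * B * Z) - t • (Y * B * Y * (Z * B)) := by
        simp only [mul_assoc, hYZ.left_comm]
    _ = _ := by
      rw [hBYBZ]
      simp only [mul_add, mul_sub, sub_mul, smul_mul_assoc, mul_assoc, hYZ.left_comm]
      abel

end Serre

/-- The order `≺` of `PrecLt`, for words in any linearly ordered alphabet. -/
def Precedes {α : Type*} [LinearOrder α] (u w : List α) : Prop :=
  u.length < w.length ∨ u.length = w.length ∧ w < u

section Order

variable {α : Type*} [LinearOrder α] {u w : List α}

theorem append_lt_append_of_length_eq (h : u < w) (hl : u.length = w.length) (v : List α) :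
    u ++ v < w ++ v := by
  induction u generalizing w with
  | nil => exact absurd (List.length_eq_zero_iff.1 hl.symm ▸ h) (lt_irrefl _)
  | cons a u ih =>
    obtain ⟨b, w, rfl⟩ := List.exists_cons_of_length_eq_add_one hl.symm
    simp only [List.cons_append, List.cons_lt_cons_iff] at h ⊢
    exact h.imp_right fun h => ⟨h.1, ih h.2 (by simpa using hl)⟩

theorem Precedes.append_left (h : Precedes u w) (v : List α) : Precedes (v ++ u) (v ++ w) := by
  refine h.imp (fun h => by simpa using h) fun h => ⟨by simpa using h.1, List.append_left_lt h.2⟩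

theorem Precedes.append_right (h : Precedes u w) (v : List α) : Precedes (u ++ v) (w ++ v) := by
  refine h.imp (fun h => by simpa using h) fun h =>
    ⟨by simpa using h.1, append_lt_append_of_length_eq h.2 h.1.symm v⟩

end Order

section WordSpan

variable (A : Type*) {R : Type*} [CommRing A] [Ring R] [Algebra A R] (b : ℕ → R)

/-- The product `B_w` for a word whose letters are arbitrary natural numbers. -/
def wordProd (w : List ℕ) : R := (w.map b).prod

theorem wordProd_append (u v : List ℕ) : wordProd b (u ++ v) = wordProd b u * wordProd b v := by
  simp [wordProd]

theorem wordProd_cons (a : ℕ) (u : List ℕ) : wordProd b (a :: u) = b a * wordProd b u := by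
  simp [wordProd]

theorem wordProd_nil : wordProd b [] = 1 := by
  simp [wordProd]

/-- The `A`-linear span of the products along the words in `P`. -/
def wordSpan (P : Set (List ℕ)) : Submodule A R := Submodule.span A (wordProd b '' P)

variable {A b} {P Q : Set (List ℕ)}

theorem wordProd_mem_wordSpan {u : List ℕ} (h : u ∈ P) : wordProd b u ∈ wordSpan A b P :=
  Submodule.subset_span (Set.mem_image_of_mem _ h)

theorem wordSpan_mono (h : P ⊆ Q) : wordSpan A b P ≤ wordSpan A b Q :=
  Submodule.span_mono (Set.image_mono h)

theorem mul_mul_mem_wordSpan {x : R} (hx : x ∈ wordSpan A b P) (v₁ v₂ : List ℕ)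
    (h : ∀ u ∈ P, v₁ ++ u ++ v₂ ∈ Q) : wordProd b v₁ * x * wordProd b v₂ ∈ wordSpan A b Q := by
  let φ := LinearMap.mulRight A (wordProd b v₂) ∘ₗ LinearMap.mulLeft A (wordProd b v₁)
  suffices wordSpan A b P ≤ (wordSpan A b Q).comap φ from this hx
  refine Submodule.span_le.2 ?_
  rintro _ ⟨u, hu, rfl⟩
  simpa [φ, wordProd_append, mul_assoc] using wordProd_mem_wordSpan (A := A) (b := b) (h u hu)

/-- Words that precede every word of length `L` with first letter `i`, because they are shorter or
because they have length `L` and a larger first letter. -/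
def lowerWords (i L : ℕ) : Set (List ℕ) :=
  {u | u.length < L ∨ u.length = L ∧ ∃ a v, u = a :: v ∧ i < a}

theorem append_mem_lowerWords {i L : ℕ} {u : List ℕ} (hu : u ∈ lowerWords i L) (v : List ℕ) :
    u ++ v ∈ lowerWords i (L + v.length) := by
  obtain h | ⟨rfl, a, u, rfl, h⟩ := hu
  · exact .inl (by simpa using h)
  · exact .inr ⟨List.length_append, a, u ++ v, rfl, h⟩

theorem cons_mem_lowerWords {i a L : ℕ} {v : List ℕ} (hL : v.length < L) (ha : i < a) :
    a :: v ∈ lowerWords i L :=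
  (Nat.succ_le_of_lt hL).lt_or_eq.imp id fun h => ⟨h, a, v, rfl, ha⟩

theorem precedes_of_mem_lowerWords {i : ℕ} {u v : List ℕ}
    (hu : u ∈ lowerWords i (i :: v).length) : Precedes u (i :: v) := by
  obtain h | ⟨hl, a, u, rfl, h⟩ := hu
  · exact .inl h
  · exact .inr ⟨hl, List.cons_lt_cons_iff.2 (.inl h)⟩

theorem mul_wordProd_mem_lowerWords {i L : ℕ} {x : R} (hx : x ∈ wordSpan A b (lowerWords i L))
    (v : List ℕ) : x * wordProd b v ∈ wordSpan A b (lowerWords i (L + v.length)) := by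
  simpa [wordProd_nil] using
    mul_mul_mem_wordSpan hx [] v fun u hu => append_mem_lowerWords hu v

variable (A b) in
/-- The product along `w` is an `A`-linear combination of products along words preceding `w`. -/
def IsReducible (w : List ℕ) : Prop := wordProd b w ∈ wordSpan A b {u | Precedes u w}

theorem IsReducible.append_append {w : List ℕ} (h : IsReducible A b w) (v₁ v₂ : List ℕ) :
    IsReducible A b (v₁ ++ w ++ v₂) := by
  rw [IsReducible, wordProd_append, wordProd_append]
  exact mul_mul_mem_wordSpan h v₁ v₂ fun u hu => (Precedes.append_left hu v₁).append_right v₂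

end WordSpan

section Rewriting

variable {A R : Type*} [CommRing A] [Ring R] [Algebra A R] {t : A} {n : ℕ} {b : ℕ → R}

/-- The first `n` elements of `b` satisfy the relations of `U^ı(sl_{n+1})` over `A`, with `t` in
place of `q + q⁻¹`. -/
structure IsSerreFamily (t : A) (n : ℕ) (b : ℕ → R) : Prop where
  commute {i j : ℕ} (hij : i + 1 < j) (hj : j < n) : Commute (b i) (b j)
  serre_succ {i : ℕ} (hi : i + 1 < n) : IsSerre t (b i) (b (i + 1))
  serre_pred {i : ℕ} (hi : i + 1 < n) : IsSerre t (b (i + 1)) (b i)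

namespace IsSerreFamily

variable {i j r s : ℕ} (hb : IsSerreFamily t n b)
include hb

theorem commute_wordProd {u v : List ℕ} (h : ∀ a ∈ u, ∀ c ∈ v, a + 1 < c ∧ c < n) :
    Commute (wordProd b u) (wordProd b v) := by
  refine Commute.list_prod_left _ _ fun x hx => Commute.list_prod_right _ _ fun y hy => ?_
  obtain ⟨a, ha, rfl⟩ := List.mem_map.1 hx
  obtain ⟨c, hc, rfl⟩ := List.mem_map.1 hy
  exact hb.commute (h a ha c hc).1 (h a ha c hc).2

theorem commute_segment_segment (hjr : j < r) (hs : s ≤ n) :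
    Commute (wordProd b (List.Ico i j)) (wordProd b (List.Ico r s)) :=
  hb.commute_wordProd fun a ha c hc => by
    rw [List.Ico.mem] at ha hc
    omega

theorem commute_segment_letter (hjr : j < r) (hr : r < n) :
    Commute (wordProd b (List.Ico i j)) (b r) := by
  simpa [wordProd] using hb.commute_segment_segment (i := i) hjr (Nat.succ_le_of_lt hr)

theorem commute_letter_segment (hir : i + 1 < r) (hs : s ≤ n) :
    Commute (b i) (wordProd b (List.Ico r s)) := by
  simpa [wordProd] using hb.commute_segment_segment (i := i) hir hs

theorem isSerre_segment_left (hir : i < r) (hr : r < n) :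
    IsSerre t (b r) (wordProd b (List.Ico i r)) := by
  obtain ⟨r, rfl⟩ := Nat.exists_eq_succ_of_ne_zero (Nat.ne_zero_of_lt hir)
  rw [List.Ico.succ_top (Nat.le_of_lt_succ hir), wordProd_append, wordProd_cons, wordProd_nil,
    mul_one]
  exact (hb.serre_pred hr).mul_left (hb.commute_segment_letter (Nat.lt_succ_self r) hr).symm

theorem isSerre_segment_right (hrs : r + 1 < s) (hs : s ≤ n) :
    IsSerre t (b r) (wordProd b (List.Ico (r + 1) s)) := by
  rw [List.Ico.eq_cons hrs, wordProd_cons]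
  exact (hb.serre_succ (hrs.trans_le hs)).mul_right
    (hb.commute_letter_segment (Nat.lt_succ_self _) hs)

theorem interior_relation (ht : IsSMulRegular R t) (hir : i < r) (hrj : r + 1 < j) (hj : j ≤ n) :
    wordProd b (List.Ico i r ++ r :: List.Ico (r + 1) j ++ [r]) =
      wordProd b (r :: List.Ico i r ++ r :: List.Ico (r + 1) j)
        + wordProd b (List.Ico (r + 1) j ++ r :: List.Ico i r ++ [r])
        - wordProd b (r :: List.Ico (r + 1) j ++ r :: List.Ico i r) := by
  have h := serre_commutator ht (hb.commute_segment_segment (i := i) (Nat.lt_succ_self r) hj)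
    (hb.isSerre_segment_left hir (by omega)) (hb.isSerre_segment_right hrj hj)
  simpa only [wordProd_append, wordProd_cons, wordProd_nil, mul_one, mul_assoc] using h

theorem segment_mul_interior_mem (ht : IsSMulRegular R t) (hir : i < r) (hrj : r < j)
    (hj : j ≤ n) :
    wordProd b (List.Ico i j ++ [r]) ∈ wordSpan A b (lowerWords i (j - i + 1)) := by
  have hsplit : List.Ico i j = List.Ico i r ++ r :: List.Ico (r + 1) j := by
    rw [← List.Ico.append_consecutive hir.le hrj.le, List.Ico.eq_cons hrj]
  rw [hsplit]
  rcases (Nat.succ_le_of_lt hrj).eq_or_lt with rfl | hrj'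
  · have h : wordProd b (List.Ico i r ++ [r] ++ [r]) =
        t • wordProd b (r :: List.Ico i r ++ [r]) + wordProd b (List.Ico i r)
          - wordProd b (r :: r :: List.Ico i r) := by
      have := hb.isSerre_segment_left hir (by omega)
      simp only [wordProd_append, wordProd_cons, wordProd_nil, mul_one, mul_assoc]
      rw [eq_sub_iff_add_eq']
      simpa only [IsSerre, mul_assoc] using this
    rw [List.Ico.self_empty, h]
    refine sub_mem (add_mem (Submodule.smul_mem _ _ (wordProd_mem_wordSpan ?_))
      (wordProd_mem_wordSpan (.inl ?_))) (wordProd_mem_wordSpan ?_)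
    · exact cons_mem_lowerWords (by simp; omega) hir
    · simp; omega
    · exact cons_mem_lowerWords (by simp; omega) hir
  · rw [hb.interior_relation ht hir hrj' hj, List.Ico.eq_cons hrj']
    refine sub_mem (add_mem (wordProd_mem_wordSpan ?_) (wordProd_mem_wordSpan ?_))
      (wordProd_mem_wordSpan ?_)
    all_goals exact cons_mem_lowerWords (by simp; omega) (by omega)

theorem segment_mul_prolonged_sub_eq (ht : IsSMulRegular R t) (hij : i < j) (hj : j + 1 < n) :
    wordProd b (List.Ico i (j + 1) ++ List.Ico i (j + 1 + 1))
        - t • wordProd b (List.Ico i (j + 1 + 1) ++ List.Ico i (j + 1)) =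
      (wordProd b (List.Ico i j ++ List.Ico i (j + 1))
          - t • wordProd b (List.Ico i (j + 1) ++ List.Ico i j)) * wordProd b [j + 1, j]
        + wordProd b (List.Ico i (j + 2) ++ [j]) * wordProd b (List.Ico i j)
        - wordProd b ((j + 1) :: List.Ico i (j + 1) ++ List.Ico i (j + 1)) := by
  have hlast : List.Ico i (j + 1) = List.Ico i j ++ [j] := List.Ico.succ_top (by omega)
  have hlast_two : List.Ico i (j + 1 + 1) = List.Ico i j ++ [j] ++ [j + 1] := by
    rw [List.Ico.succ_top (by omega), hlast]
  have hYZ := hb.commute_segment_letter (i := i) (Nat.lt_succ_self j) hj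
  have hcomm := serre_commutator ht hYZ
    (hb.isSerre_segment_left hij (by omega)) (hb.serre_succ hj)
  rw [hlast_two, hlast]
  simpa only [wordProd_append, wordProd_cons, wordProd_nil, mul_one, mul_assoc] using
    mul_prolonged_sub_eq (t := t) hYZ hcomm

theorem segment_mul_prolonged_sub_mem (ht : IsSMulRegular R t) (hij : i < j) (hj : j < n) :
    wordProd b (List.Ico i j ++ List.Ico i (j + 1))
      - t • wordProd b (List.Ico i (j + 1) ++ List.Ico i j)
      ∈ wordSpan A b (lowerWords i (2 * (j - i) + 1)) := by
  induction j, hij using Nat.le_induction with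
  | base =>
    have hserre := hb.serre_succ hj
    have hbase : wordProd b [i, i, i + 1] - t • wordProd b [i, i + 1, i] =
        wordProd b [i + 1] - wordProd b [i + 1, i, i] := by
      rw [sub_eq_sub_iff_add_eq_add]
      simpa [IsSerre, wordProd, mul_assoc, add_comm] using hserre
    have hpair : List.Ico i (i + 2) = [i, i + 1] := by
      rw [List.Ico.eq_cons (by omega), List.Ico.succ_singleton]
    simp only [List.Ico.succ_singleton, hpair, List.cons_append, List.nil_append, hbase,
      Nat.succ_eq_add_one]
    refine sub_mem (wordProd_mem_wordSpan (cons_mem_lowerWords ?_ ?_))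
      (wordProd_mem_wordSpan (cons_mem_lowerWords ?_ ?_)) <;> simp
  | succ j hij ih =>
    rw [hb.segment_mul_prolonged_sub_eq ht hij hj]
    have hshorter := mul_wordProd_mem_lowerWords (ih (by omega)) [j + 1, j]
    have hinterior := mul_wordProd_mem_lowerWords
      (hb.segment_mul_interior_mem ht hij (show j < j + 2 by omega) hj) (List.Ico i j)
    refine sub_mem (add_mem ?_ ?_)
      (wordProd_mem_wordSpan (cons_mem_lowerWords (by simp; omega) (by omega)))
    · convert hshorter using 3
      simp; omega
    · convert hinterior using 3
      simp; omega

theorem isReducible_segment_pair_of_lt (hjr : j < r) (hij : i < j) (hrs : r < s) (hs : s ≤ n) :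
    IsReducible A b (List.Ico i j ++ List.Ico r s) := by
  have hletters : IsReducible A b ([j - 1] ++ [r]) := by
    have hcomm : wordProd b ([j - 1] ++ [r]) = wordProd b [r, j - 1] := by
      simpa [wordProd] using (hb.commute (show j - 1 + 1 < r by omega) (by omega)).eq
    rw [IsReducible, hcomm]
    exact wordProd_mem_wordSpan (.inr ⟨rfl, List.cons_lt_cons_iff.2 (.inl (by omega))⟩)
  have hsplit : List.Ico i j ++ List.Ico r s =
      List.Ico i (j - 1) ++ ([j - 1] ++ [r]) ++ List.Ico (r + 1) s := by
    obtain ⟨j, rfl⟩ := Nat.exists_eq_succ_of_ne_zero (Nat.ne_zero_of_lt hij)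
    rw [List.Ico.succ_top (Nat.le_of_lt_succ hij), List.Ico.eq_cons hrs]
    simp
  rw [hsplit]
  exact hletters.append_append _ _

theorem isReducible_segment_pair_of_mem_Ioo (ht : IsSMulRegular R t) (hir : i < r) (hrj : r < j)
    (hrs : r < s) (hj : j ≤ n) : IsReducible A b (List.Ico i j ++ List.Ico r s) := by
  have hinterior : IsReducible A b (List.Ico i j ++ [r]) := by
    refine wordSpan_mono (fun u hu => ?_) (hb.segment_mul_interior_mem ht hir hrj hj)
    rw [List.Ico.eq_cons (hir.trans hrj)]
    exact precedes_of_mem_lowerWords (by convert hu using 2; simp; omega)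
  rw [List.Ico.eq_cons hrs]
  simpa using hinterior.append_append [] (List.Ico (r + 1) s)

theorem isReducible_segment_pair_of_prefix (ht : IsSMulRegular R t) (hij : i < j) (hjs : j < s)
    (hs : s ≤ n) :
    IsReducible A b (List.Ico i j ++ List.Ico i s) := by
  have hprolonged : IsReducible A b (List.Ico i j ++ List.Ico i (j + 1)) := by
    rw [IsReducible, ← sub_add_cancel (wordProd b _)
      (t • wordProd b (List.Ico i (j + 1) ++ List.Ico i j))]
    refine add_mem (wordSpan_mono (fun u hu => ?_)
      (hb.segment_mul_prolonged_sub_mem ht hij (hjs.trans_le hs)))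
      (Submodule.smul_mem _ _ (wordProd_mem_wordSpan (.inr ⟨?_, ?_⟩)))
    · rw [List.Ico.eq_cons hij]
      exact precedes_of_mem_lowerWords (by convert hu using 2; simp; omega)
    · simp; omega
    · rw [List.Ico.succ_top hij.le, List.append_assoc]
      refine List.append_left_lt ?_
      rw [List.Ico.eq_cons hij]
      exact List.cons_lt_cons_iff.2 (.inl hij)
  rw [← List.Ico.append_consecutive (show i ≤ j + 1 by omega) (Nat.succ_le_of_lt hjs)]
  simpa using hprolonged.append_append [] (List.Ico (j + 1) s)

theorem isReducible_segment_pair (ht : IsSMulRegular R t) {x y : ℕ × ℕ} (hx : x.1 < x.2)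
    (hy : y.1 < y.2) (hxn : x.2 ≤ n) (hyn : y.2 ≤ n) (hxy : toLex x < toLex y)
    (hne : x.2 ≠ y.1) : IsReducible A b (List.Ico x.1 x.2 ++ List.Ico y.1 y.2) := by
  obtain h | ⟨h, h'⟩ := Prod.Lex.toLex_lt_toLex.1 hxy
  · obtain hlt | hgt := hne.lt_or_gt
    · exact hb.isReducible_segment_pair_of_lt hlt hx hy hyn
    · exact hb.isReducible_segment_pair_of_mem_Ioo ht h hgt hy hxn
  · rw [← h]
    exact hb.isReducible_segment_pair_of_prefix ht hx h' hyn

theorem exists_isDescending_or_isReducible_concat (ht : IsSMulRegular R t) (T : List (ℕ × ℕ))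
    (hT : ∀ x ∈ T, x.1 < x.2 ∧ x.2 ≤ n) :
    (∃ T', IsDescending T' ∧ concat T' = concat T) ∨ IsReducible A b (concat T) := by
  by_cases hdesc : T.Pairwise fun x y => toLex y ≤ toLex x
  · exact .inl ⟨T, ⟨fun x hx => (hT x hx).1, hdesc⟩, rfl⟩
  obtain ⟨T₁, x, y, T₂, rfl, hxy⟩ : ∃ T₁ x y T₂, T = T₁ ++ x :: y :: T₂ ∧ toLex x < toLex y := by
    have : IsTrans (ℕ × ℕ) fun x y => toLex y ≤ toLex x := ⟨fun _ _ _ h h' => h'.trans h⟩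
    rw [← List.isChain_iff_pairwise, List.isChain_iff_forall_rel_of_append_cons_cons] at hdesc
    push Not at hdesc
    obtain ⟨x, y, T₁, T₂, h, hxy⟩ := hdesc
    exact ⟨T₁, x, y, T₂, h, hxy⟩
  have hx := hT x (by simp)
  have hy := hT y (by simp)
  by_cases hmerge : x.2 = y.1
  · have hcat : concat (T₁ ++ (x.1, y.2) :: T₂) = concat (T₁ ++ x :: y :: T₂) := by
      simp only [concat_append, concat_cons, ← List.append_assoc (List.Ico x.1 x.2)]
      rw [hmerge, List.Ico.append_consecutive (hmerge ▸ hx.1.le) hy.1.le]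
    rw [← hcat]
    refine exists_isDescending_or_isReducible_concat ht _ fun z hz => ?_
    obtain hz | rfl | hz : z ∈ T₁ ∨ z = (x.1, y.2) ∨ z ∈ T₂ := by simpa using hz
    · exact hT z (by simp [hz])
    · exact ⟨hx.1.trans (hmerge ▸ hy.1), hy.2⟩
    · exact hT z (by simp [hz])
  · right
    have hpair := hb.isReducible_segment_pair (A := A) ht hx.1 hy.1 hx.2 hy.2 hxy hmerge
    simpa [concat_append, concat_cons] using hpair.append_append (concat T₁) (concat T₂)
termination_by T.length

theorem exists_isDescending_or_isReducible (ht : IsSMulRegular R t) (w : List ℕ)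
    (hw : ∀ a ∈ w, a < n) : (∃ T, IsDescending T ∧ concat T = w) ∨ IsReducible A b w := by
  have hcat : concat (w.map fun a => (a, a + 1)) = w := by
    simp [concat, List.flatMap_map, List.Ico.succ_singleton]
  have h := hb.exists_isDescending_or_isReducible_concat (A := A) ht (w.map fun a => (a, a + 1))
    (by simpa using hw)
  rwa [hcat] at h

end IsSerreFamily

end Rewriting

/-! ### Good words and integrality -/

/-- The representation of `U^ı(sl_{n+1})` on the tensor powers of its vector representation. -/
noncomputable def rep (n : ℕ) :
    Ui n →ₐ[RatFunc ℚ] Module.End (RatFunc ℚ) (ConfSpace (RatFunc ℚ)) :=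
  RingQuot.liftAlgHom (RatFunc ℚ)
    ⟨FreeAlgebra.lift (RatFunc ℚ) fun i : Fin n => exchange RatFunc.X (i : ℕ), by
      rintro _ _ (⟨i, j, h⟩ | ⟨i, j, h | h⟩) <;> ext1 f
      · simpa using exchange_comm RatFunc.X f h
      · simpa [mul_assoc, ← h] using exchange_serre_succ RatFunc.X_ne_zero i f
      · simpa [mul_assoc, ← h] using exchange_serre_pred RatFunc.X_ne_zero j f⟩

theorem rep_Bword (n : ℕ) (w : List (Fin n)) :
    rep n (Bword (Bgen n) w) = ((w.map Fin.val).map (exchange RatFunc.X)).prod := by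
  rw [Bword, map_list_prod, List.map_map, List.map_map]
  congr 2
  ext1 i
  simp [rep, Bgen]

theorem map_val_strictMono (n : ℕ) : StrictMono (List.map (Fin.val : Fin n → ℕ)) :=
  fun _ _ h => List.map_lt (fun _ _ h => h) h

theorem isGood_of_map_val_eq_concat {n : ℕ} {g : List (Fin n)} {T : List (ℕ × ℕ)}
    (hT : IsDescending T) (hg : g.map Fin.val = concat T) : IsGood (RatFunc ℚ) (Bgen n) g := by
  intro hmem
  let coeff : Ui n →ₗ[RatFunc ℚ] RatFunc ℚ :=
    (LinearMap.proj T ∘ₗ LinearMap.applyₗ (arrived (RatFunc ℚ))) ∘ₗ (rep n).toLinearMap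
  have hcoeff (w : List (Fin n)) : coeff (Bword (Bgen n) w) =
      ((w.map Fin.val).map (exchange RatFunc.X)).prod (arrived (RatFunc ℚ)) T := by
    rw [← rep_Bword]
    rfl
  have hlen : g.length = (concat T).length := by rw [← hg, List.length_map]
  have hsmaller : Submodule.span (RatFunc ℚ) (Bword (Bgen n) '' {w | PrecLt w g}) ≤
      LinearMap.ker coeff := by
    refine Submodule.span_le.2 ?_
    rintro _ ⟨w, hw, rfl⟩
    by_contra hne
    rw [SetLike.mem_coe, LinearMap.mem_ker, hcoeff] at hne
    have hcomp := completes_of_prod_exchange_ne_zero hne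
    obtain hw | ⟨hw, hlt⟩ := hw
    · have := hcomp.length_concat_le
      rw [List.length_map] at this
      omega
    · have hle := hT.le_concat_of_completes hcomp (by rw [List.length_map, hw, hlen])
      rw [← hg] at hle
      exact (map_val_strictMono n hlt).not_ge hle
  have hzero : coeff (Bword (Bgen n) g) = 0 := hsmaller hmem
  rw [hcoeff, hg] at hzero
  obtain ⟨_, _, hX⟩ := exists_linearOrder_ratFunc
  exact ((completes_concat T).prod_exchange_pos hX).ne' hzero

/-- The generator `B_a`, with junk value `0` for `a ≥ n`, so that words over `ℕ` have products. -/
noncomputable def letter (n a : ℕ) : Ui n := if h : a < n then Bgen n ⟨a, h⟩ else 0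

theorem letter_val {n : ℕ} (i : Fin n) : letter n i = Bgen n i := dif_pos i.2

theorem wordProd_letter_map_val {n : ℕ} (w : List (Fin n)) :
    wordProd (letter n) (w.map Fin.val) = Bword (Bgen n) w := by
  simp [wordProd, Bword, Function.comp_def, letter_val]

theorem wordProd_letter_eq_zero {n a : ℕ} {w : List ℕ} (ha : a ∈ w) (hn : n ≤ a) :
    wordProd (letter n) w = 0 :=
  List.prod_eq_zero (List.mem_map.2 ⟨a, ha, dif_neg hn.not_gt⟩)

/-- The quantum integer `[2] = q + q⁻¹` in `ℤ[q, q⁻¹]`. -/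
noncomputable def quantumTwo : LaurentInt :=
  ⟨RatFunc.X + RatFunc.X⁻¹,
    add_mem (Subring.subset_closure (by simp)) (Subring.subset_closure (by simp))⟩

theorem isSMulRegular_quantumTwo (n : ℕ) : IsSMulRegular (Ui n) quantumTwo :=
  smul_right_injective (Ui n) (r := RatFunc.X + RatFunc.X⁻¹) X_add_inv_X_ne_zero

theorem isSerre_Bgen {n : ℕ} {i j : Fin n} (h : (i : ℕ) + 1 = j ∨ (j : ℕ) + 1 = i) :
    IsSerre quantumTwo (Bgen n i) (Bgen n j) := by
  have hrel := RingQuot.mkAlgHom_rel (RatFunc ℚ) (UiRel.serre i j h)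
  simp only [map_add, map_mul, map_smul] at hrel
  exact hrel

theorem isSerreFamily_letter (n : ℕ) : IsSerreFamily quantumTwo n (letter n) where
  commute {i j} hij hj := by
    lift j to Fin n using hj
    lift i to Fin n using by omega
    have hrel := RingQuot.mkAlgHom_rel (RatFunc ℚ) (UiRel.comm i j hij)
    simp only [map_mul] at hrel
    simp only [letter_val]
    exact hrel
  serre_succ {i} hi := by
    rw [letter, letter, dif_pos hi, dif_pos (by omega)]
    exact isSerre_Bgen (.inl rfl)
  serre_pred {i} hi := by
    rw [letter, letter, dif_pos hi, dif_pos (by omega)]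
    exact isSerre_Bgen (.inr rfl)

theorem precLt_wellFounded (n : ℕ) : WellFounded (PrecLt (n := n)) := by
  have hlex {x y : List (Fin n)} (h : LexLt y x) (hl : x.length = y.length) :
      List.Lex (· > ·) x y := by
    induction h with
    | nil => simp at hl
    | cons _ ih => exact .cons (ih (by simpa using hl))
    | rel h => exact .rel h
  refine Subrelation.wf ?_ (List.Shortlex.wf (r := ((· > ·) : Fin n → Fin n → Prop)) wellFounded_gt)
  rintro x y (h | ⟨h, h'⟩)
  · exact .of_length_lt h
  · exact .of_lex h (hlex h' h)

theorem precLt_of_precedes {n : ℕ} {x y : List (Fin n)}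
    (h : Precedes (x.map Fin.val) (y.map Fin.val)) : PrecLt x y := by
  simp only [Precedes, List.length_map] at h
  exact h.imp_right fun h => ⟨h.1, (map_val_strictMono n).lt_iff_lt.1 h.2⟩

theorem precLe_trans_precLt {n : ℕ} {x y z : List (Fin n)} (h : PrecLe x y) (h' : PrecLt y z) :
    PrecLe x z := by
  obtain h | rfl := h
  · left
    rcases h with h | ⟨h, hyx⟩ <;> rcases h' with h' | ⟨h', hzy⟩
    · exact .inl (h.trans h')
    · exact .inl (h' ▸ h)
    · exact .inl (h ▸ h')
    · exact .inr ⟨h.trans h', List.lt_trans (α := Fin n) hzy hyx⟩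
  · exact .inl h'

theorem Bword_mem_span_precLt {n : ℕ} {w : List (Fin n)}
    (h : IsReducible LaurentInt (letter n) (w.map Fin.val)) :
    Bword (Bgen n) w ∈ Submodule.span LaurentInt (Bword (Bgen n) '' {u | PrecLt u w}) := by
  rw [IsReducible, wordProd_letter_map_val] at h
  refine Submodule.span_le.2 ?_ h
  rintro _ ⟨u, hu, rfl⟩
  by_cases hletters : ∀ a ∈ u, a < n
  · lift u to List (Fin n) using hletters
    rw [wordProd_letter_map_val]
    exact Submodule.subset_span ⟨u, precLt_of_precedes hu, rfl⟩
  · push Not at hletters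
    obtain ⟨a, ha, hn⟩ := hletters
    rw [wordProd_letter_eq_zero ha hn]
    exact zero_mem _

theorem Bword_mem_span_isGood {n : ℕ} (w : List (Fin n)) :
    Bword (Bgen n) w ∈ Submodule.span LaurentInt
      (Bword (Bgen n) '' {g | IsGood (RatFunc ℚ) (Bgen n) g ∧ PrecLe g w}) := by
  induction w using (precLt_wellFounded n).induction with
  | _ w ih =>
    have hw : ∀ a ∈ w.map Fin.val, a < n := by simp
    obtain ⟨T, hT, h⟩ | h := (isSerreFamily_letter n).exists_isDescending_or_isReducible
      (A := LaurentInt) (isSMulRegular_quantumTwo n) _ hw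
    · exact Submodule.subset_span ⟨w, ⟨isGood_of_map_val_eq_concat hT h.symm, .inr rfl⟩, rfl⟩
    · refine Submodule.span_le.2 ?_ (Bword_mem_span_precLt h)
      rintro _ ⟨u, hu, rfl⟩
      refine Submodule.span_mono (Set.image_mono ?_) (ih u hu)
      exact fun g hg => ⟨hg.1, precLe_trans_precLt hg.2 hu⟩

theorem isIntegralWord_of_mem_span {n : ℕ} {R : Type*} [Ring R] [Algebra (RatFunc ℚ) R]
    {b : Fin n → R} {w : List (Fin n)}
    (h : Bword b w ∈ Submodule.span LaurentInt
      (Bword b '' {g | IsGood (RatFunc ℚ) b g ∧ PrecLe g w})) : IsIntegralWord b w := by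
  obtain ⟨c, hc, hsum⟩ := (Finsupp.mem_span_image_iff_linearCombination LaurentInt).1 h
  refine ⟨c.support, fun g => c g, fun g hg => hc hg, fun g _ => (c g).2, ?_⟩
  rw [← hsum, Finsupp.linearCombination_apply]
  rfl

end SplitIQuantum

theorem segment_pairs_integral_general {n : ℕ} (w : List (Fin n)) : IsIntegralWord (Bgen n) w :=
  SplitIQuantum.isIntegralWord_of_mem_span (SplitIQuantum.Bword_mem_span_isGood w)

/-- Let `l₁ = v[i,j)` and `l₂ = v[r,s)` be segments with either `i < r`, or `i = r` and
`j < s`. Then the word `l₁l₂` is integral for `U^ı(sl_{n+1})`. -/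
theorem segment_pairs_integral {n : ℕ} (l₁ l₂ : List (Fin n))
    (h₁ : IsSegment l₁) (h₂ : IsSegment l₂)
    (hcase : (∃ a ∈ l₁.head?, ∃ c ∈ l₂.head?, (a : ℕ) < (c : ℕ)) ∨
      (l₁.head? = l₂.head? ∧ l₁.length < l₂.length)) :
    IsIntegralWord (Bgen n) (l₁ ++ l₂) :=
  segment_pairs_integral_general (l₁ ++ l₂)
end
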